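/- Fix an integer k ≥ 4. For every ε > 0 there is a constant C_ε such that for every integer N ≥ 1 and every real 0 ≤ λ ≤ 1, one has ∫_{|x| ≤ 1} ∫_{0}^{λ} | Σ_{N ≤ n ≤ 2N} e(x n² + y n^k) |⁶ dy dx ≤ C_ε ( λ · N^{3+ε} + N^{4-k+ε} ), where the inner sum is over integers n with N ≤ n ≤ 2N. -/

import Mathlib

open MeasureTheory Real

noncomputable section

/-- `e(t) = e^{2πit}`. -/
def ee (t : ℝ) : ℂ := Complex.exp (2 * Real.pi * Complex.I * t)

/-! Cut a block of consecutive frequencies into `r` equal subblocks. Pointwise, either one subblock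
dominates, or two separated ones are both large, so the sixth moment of the block is controlled by
`r` sixth moments of subblocks and by the moments `∫ |S|² |T|⁴` with `S` and `T` separated. Cut such
an `S` further. The product of `S_i T²` and the conjugate of `S_j T²` integrates to zero unless some
`n ∈ S_i`, `n' ∈ S_j` and `m`s in `T` satisfy `n² + m₁² + m₂² = n'² + m₁'² + m₂'²` together with the
same relation for `k`-th powers up to an error below `N ^ (k - 1)`. Since `S` and `T` are separated,
this forces `n` and `n'` to be close: the pieces of `S` are almost orthogonal against `T²`.
Cauchy–Schwarz then exchanges the roles of `S` and `T`, doubling the difference of the scales, and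
iterating `m` times saves the `m`-th power of a factor that may be chosen arbitrarily close to `1`.

For blocks shorter than about `√N` the quadratic relation alone forces
`n + m₁ + m₂ = n' + m₁' + m₂'`, whence the closeness of `n` and `n'`. For longer blocks it comes
from the combination of `t ^ k` and `t ^ 2` which is stationary at `m₁`. The error allowed in the
`k`-th powers comes from weighting `y` by a Fejér kernel concentrated on windows of length
`N ^ (1 - k)`. The interval `[0, λ]` is covered by translates of such a window, and a translation in
`y` only changes the coefficients of the sum. -/

open scoped ComplexConjugate InnerProductSpace

section AlmostOrthogonality

open Classical in
theorem norm_sum_sq_le_of_card_inner_ne_zero_le {ι 𝕜 E : Type*} [RCLike 𝕜]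
    [SeminormedAddCommGroup E] [InnerProductSpace 𝕜 E] (s : Finset ι) (v : ι → E) (D : ℕ)
    (hD : ∀ i ∈ s, {j ∈ s | ⟪v i, v j⟫_𝕜 ≠ 0}.card ≤ D) :
    ‖∑ i ∈ s, v i‖ ^ 2 ≤ D * ∑ i ∈ s, ‖v i‖ ^ 2 := by
  have entry_le (i j : ι) : RCLike.re ⟪v i, v j⟫_𝕜 ≤
      (if ⟪v i, v j⟫_𝕜 ≠ 0 then ‖v i‖ ^ 2 / 2 else 0) +
        (if ⟪v j, v i⟫_𝕜 ≠ 0 then ‖v j‖ ^ 2 / 2 else 0) := by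
    by_cases h : ⟪v i, v j⟫_𝕜 = 0
    · simp [h, inner_eq_zero_symm.mp h]
    · have hij := re_inner_le_norm (𝕜 := 𝕜) (v i) (v j)
      rw [if_pos h, if_pos (mt inner_eq_zero_symm.mp h)]
      linarith [two_mul_le_add_sq ‖v i‖ ‖v j‖]
  have row_le : ∑ i ∈ s, ∑ j ∈ s, (if ⟪v i, v j⟫_𝕜 ≠ 0 then ‖v i‖ ^ 2 / 2 else 0) ≤
      ∑ i ∈ s, D * (‖v i‖ ^ 2 / 2) := by
    refine Finset.sum_le_sum fun i hi ↦ ?_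
    rw [← Finset.sum_filter, Finset.sum_const, nsmul_eq_mul]
    gcongr
    exact hD i hi
  calc ‖∑ i ∈ s, v i‖ ^ 2 = RCLike.re ⟪∑ i ∈ s, v i, ∑ j ∈ s, v j⟫_𝕜 :=
        (inner_self_eq_norm_sq _).symm
    _ = ∑ i ∈ s, ∑ j ∈ s, RCLike.re ⟪v i, v j⟫_𝕜 := by
        simp_rw [sum_inner, inner_sum, map_sum]
    _ ≤ ∑ i ∈ s, ∑ j ∈ s, ((if ⟪v i, v j⟫_𝕜 ≠ 0 then ‖v i‖ ^ 2 / 2 else 0) +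
          (if ⟪v j, v i⟫_𝕜 ≠ 0 then ‖v j‖ ^ 2 / 2 else 0)) := by
        gcongr with i _ j _
        exact entry_le i j
    _ = 2 * ∑ i ∈ s, ∑ j ∈ s, (if ⟪v i, v j⟫_𝕜 ≠ 0 then ‖v i‖ ^ 2 / 2 else 0) := by
        simp_rw [Finset.sum_add_distrib]
        rw [Finset.sum_comm (f := fun i j ↦ if ⟪v j, v i⟫_𝕜 ≠ 0 then ‖v j‖ ^ 2 / 2 else 0), two_mul]
    _ ≤ 2 * ∑ i ∈ s, D * (‖v i‖ ^ 2 / 2) := by gcongr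
    _ = D * ∑ i ∈ s, ‖v i‖ ^ 2 := by
        rw [Finset.mul_sum, Finset.mul_sum]
        exact Finset.sum_congr rfl fun i _ ↦ by ring

variable {X 𝕜 : Type*} [RCLike 𝕜] [MeasurableSpace X] {μ : Measure X} {f g : X → 𝕜}

theorem inner_toLp_two (hf : MemLp f 2 μ) (hg : MemLp g 2 μ) :
    ⟪hf.toLp f, hg.toLp g⟫_𝕜 = ∫ x, g x * conj (f x) ∂μ := by
  rw [L2.inner_def]
  refine integral_congr_ae ?_
  filter_upwards [hf.coeFn_toLp, hg.coeFn_toLp] with x hfx hgx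
  rw [hfx, hgx, RCLike.inner_apply]

theorem norm_toLp_two_sq (hf : MemLp f 2 μ) : ‖hf.toLp f‖ ^ 2 = ∫ x, ‖f x‖ ^ 2 ∂μ := by
  have h : ((‖hf.toLp f‖ ^ 2 : ℝ) : 𝕜) = ((∫ x, ‖f x‖ ^ 2 ∂μ : ℝ) : 𝕜) := by
    rw [← integral_ofReal, RCLike.ofReal_pow]
    simpa [RCLike.mul_conj] using
      (inner_self_eq_norm_sq_to_K (𝕜 := 𝕜) (hf.toLp f)).symm.trans (inner_toLp_two hf hf)
  exact_mod_cast h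

theorem norm_integral_mul_conj_sq_le (hf : MemLp f 2 μ) (hg : MemLp g 2 μ) :
    ‖∫ x, f x * conj (g x) ∂μ‖ ^ 2 ≤ (∫ x, ‖f x‖ ^ 2 ∂μ) * ∫ x, ‖g x‖ ^ 2 ∂μ := by
  rw [← inner_toLp_two hg hf, ← norm_toLp_two_sq hf, ← norm_toLp_two_sq hg, mul_comm, ← mul_pow]
  gcongr
  exact norm_inner_le_norm _ _

open Classical in
theorem integral_norm_sum_sq_le_of_card_integral_mul_conj_ne_zero_le {ι : Type*} (s : Finset ι)
    {F : ι → X → 𝕜} (hF : ∀ i, MemLp (F i) 2 μ) (D : ℕ)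
    (hD : ∀ i ∈ s, {j ∈ s | ∫ x, F i x * conj (F j x) ∂μ ≠ 0}.card ≤ D) :
    ∫ x, ‖∑ i ∈ s, F i x‖ ^ 2 ∂μ ≤ D * ∑ i ∈ s, ∫ x, ‖F i x‖ ^ 2 ∂μ := by
  have hsum : MemLp (fun x ↦ ∑ i ∈ s, F i x) 2 μ := memLp_finsetSum s fun i _ ↦ hF i
  have toLp_sum : hsum.toLp _ = ∑ i ∈ s, (hF i).toLp (F i) := by
    refine Lp.ext ?_
    have h := Lp.coeFn_finsetSum s fun i ↦ (hF i).toLp (F i)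
    have hall : ∀ᵐ x ∂μ, ∀ i ∈ s, (hF i).toLp (F i) x = F i x :=
      (Finset.eventually_all s).mpr fun i _ ↦ (hF i).coeFn_toLp
    filter_upwards [h, hall, hsum.coeFn_toLp] with x hx hix hsx
    rw [hsx, hx, Finset.sum_apply]
    exact Finset.sum_congr rfl fun i hi ↦ (hix i hi).symm
  have card_le : ∀ i ∈ s, {j ∈ s | ⟪(hF i).toLp (F i), (hF j).toLp (F j)⟫_𝕜 ≠ 0}.card ≤ D := by
    intro i hi
    simp_rw [ne_eq, inner_eq_zero_symm (x := (hF i).toLp (F i)), inner_toLp_two]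
    exact hD i hi
  have h := norm_sum_sq_le_of_card_inner_ne_zero_le s (fun i ↦ (hF i).toLp (F i)) D card_le
  rw [← toLp_sum, norm_toLp_two_sq] at h
  simpa only [norm_toLp_two_sq] using h

end AlmostOrthogonality

section SixthPowers

variable {X : Type*} [MeasurableSpace X] {μ : Measure X}

theorem memLp_two_mul_mul {𝕜 : Type*} [RCLike 𝕜] {f g h : X → 𝕜} (hf : MemLp f 6 μ)
    (hg : MemLp g 6 μ) (hh : MemLp h 6 μ) : MemLp (fun x ↦ f x * g x * h x) 2 μ := by
  have inv_add_inv : (6 : ENNReal)⁻¹ + 6⁻¹ = 3⁻¹ ∧ (3 : ENNReal)⁻¹ + 6⁻¹ = 2⁻¹ := by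
    constructor <;>
    · rw [← ENNReal.toReal_eq_toReal_iff' (by simp) (by simp),
        ENNReal.toReal_add (by simp) (by simp)]
      norm_num
  have : ENNReal.HolderTriple 6 6 3 := ⟨inv_add_inv.1⟩
  have : ENNReal.HolderTriple 3 6 2 := ⟨inv_add_inv.2⟩
  exact hh.mul (hg.mul hf (r := 3))

theorem integrable_norm_sq_mul_norm_pow_four {f g : X → ℂ} (hf : MemLp f 6 μ)
    (hg : MemLp g 6 μ) : Integrable (fun x ↦ ‖f x‖ ^ 2 * ‖g x‖ ^ 4) μ := by
  refine ((memLp_two_mul_mul hf hg hg).integrable_norm_pow two_ne_zero).congr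
    (.of_forall fun x ↦ ?_)
  simp only [norm_mul]
  ring

theorem sq_integral_norm_sq_mul_norm_pow_four_le {f g : X → ℂ} (hf : MemLp f 6 μ)
    (hg : MemLp g 6 μ) :
    (∫ x, ‖f x‖ ^ 2 * ‖g x‖ ^ 4 ∂μ) ^ 2 ≤
      (∫ x, ‖g x‖ ^ 2 * ‖f x‖ ^ 4 ∂μ) * ∫ x, ‖g x‖ ^ 6 ∂μ := by
  have h := norm_integral_mul_conj_sq_le (memLp_two_mul_mul hg.norm hf.norm hf.norm)
    (memLp_two_mul_mul hg.norm hg.norm hg.norm)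
  simp only [conj_trivial, Real.norm_eq_abs, sq_abs] at h
  ring_nf at h ⊢
  simpa only [mul_comm] using h

theorem integral_norm_sq_mul_norm_pow_four_pow_three_le {f g : X → ℂ} (hf : MemLp f 6 μ)
    (hg : MemLp g 6 μ) :
    (∫ x, ‖f x‖ ^ 2 * ‖g x‖ ^ 4 ∂μ) ^ 3 ≤
      (∫ x, ‖f x‖ ^ 6 ∂μ) * (∫ x, ‖g x‖ ^ 6 ∂μ) ^ 2 := by
  have hfg := sq_integral_norm_sq_mul_norm_pow_four_le hf hg
  have hgf := sq_integral_norm_sq_mul_norm_pow_four_le hg hf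
  set I := ∫ x, ‖f x‖ ^ 2 * ‖g x‖ ^ 4 ∂μ
  set J := ∫ x, ‖g x‖ ^ 2 * ‖f x‖ ^ 4 ∂μ
  set P := ∫ x, ‖f x‖ ^ 6 ∂μ
  set Q := ∫ x, ‖g x‖ ^ 6 ∂μ
  have hI : 0 ≤ I := integral_nonneg fun x ↦ by positivity
  have hP : 0 ≤ P := integral_nonneg fun x ↦ by positivity
  obtain hI | hI := hI.eq_or_lt
  · rw [← hI, zero_pow three_ne_zero]
    exact mul_nonneg hP (sq_nonneg Q)
  refine le_of_mul_le_mul_right ?_ hI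
  calc I ^ 3 * I = (I ^ 2) ^ 2 := by ring
    _ ≤ (J * Q) ^ 2 := by gcongr
    _ = J ^ 2 * Q ^ 2 := by ring
    _ ≤ I * P * Q ^ 2 := by gcongr
    _ = P * Q ^ 2 * I := by ring

end SixthPowers

section BroadNarrow

variable {r j : ℕ} {a : ℕ → ℝ}

theorem sum_adjacent_le_of_forall_le (haj : 0 ≤ a j) (hmax : ∀ i ∈ Finset.range r, a i ≤ a j) :
    ∑ i ∈ Finset.range r with ¬(i + 2 ≤ j ∨ j + 2 ≤ i), a i ≤ 3 * a j := by
  have card_le : {i ∈ Finset.range r | ¬(i + 2 ≤ j ∨ j + 2 ≤ i)}.card ≤ 3 := by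
    calc {i ∈ Finset.range r | ¬(i + 2 ≤ j ∨ j + 2 ≤ i)}.card
        ≤ (Finset.Icc (j - 1) (j + 1)).card := Finset.card_le_card fun i hi ↦ by
          simp only [Finset.mem_filter, Finset.mem_Icc] at hi ⊢
          omega
      _ ≤ 3 := by rw [Nat.card_Icc]; omega
  calc ∑ i ∈ Finset.range r with ¬(i + 2 ≤ j ∨ j + 2 ≤ i), a i
      ≤ {i ∈ Finset.range r | ¬(i + 2 ≤ j ∨ j + 2 ≤ i)}.card • a j :=
        Finset.sum_le_card_nsmul _ _ _ fun i hi ↦ hmax i (Finset.mem_filter.mp hi).1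
    _ ≤ 3 * a j := by
        rw [nsmul_eq_mul]
        gcongr
        exact_mod_cast card_le

theorem sum_separated_pow_six_le_of_forall_le (ha : ∀ i, 0 ≤ a i)
    (hmax : ∀ i ∈ Finset.range r, a i ≤ a j) :
    (∑ i ∈ Finset.range r with i + 2 ≤ j ∨ j + 2 ≤ i, a i) ^ 6 ≤
      r ^ 5 * ∑ i ∈ Finset.range r with i + 2 ≤ j ∨ j + 2 ≤ i, a i ^ 2 * a j ^ 4 := by
  calc (∑ i ∈ Finset.range r with i + 2 ≤ j ∨ j + 2 ≤ i, a i) ^ 6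
      ≤ {i ∈ Finset.range r | i + 2 ≤ j ∨ j + 2 ≤ i}.card ^ 5 *
          ∑ i ∈ Finset.range r with i + 2 ≤ j ∨ j + 2 ≤ i, a i ^ 6 :=
        pow_sum_le_card_mul_sum_pow (fun i _ ↦ ha i) 5
    _ ≤ r ^ 5 * ∑ i ∈ Finset.range r with i + 2 ≤ j ∨ j + 2 ≤ i, a i ^ 2 * a j ^ 4 := by
        gcongr with i hi
        · simpa using Finset.card_filter_le (Finset.range r) fun i ↦ i + 2 ≤ j ∨ j + 2 ≤ i
        · have := ha i
          calc a i ^ 6 = a i ^ 2 * a i ^ 4 := by ring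
            _ ≤ a i ^ 2 * a j ^ 4 := by
              gcongr
              exact hmax i (Finset.mem_filter.mp hi).1

theorem sum_pow_six_le_broad_narrow (r : ℕ) (ha : ∀ i, 0 ≤ a i) :
    (∑ i ∈ Finset.range r, a i) ^ 6 ≤ 32 * 729 * ∑ i ∈ Finset.range r, a i ^ 6 +
      32 * r ^ 5 * ∑ p ∈ Finset.range r ×ˢ Finset.range r with p.1 + 2 ≤ p.2 ∨ p.2 + 2 ≤ p.1,
        a p.1 ^ 2 * a p.2 ^ 4 := by
  obtain rfl | hr := r.eq_zero_or_pos
  · simp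
  obtain ⟨j, hj, hmax⟩ :=
    Finset.exists_max_image (Finset.range r) a (Finset.nonempty_range_iff.mpr hr.ne')
  have separated_le : ∑ i ∈ Finset.range r with i + 2 ≤ j ∨ j + 2 ≤ i, a i ^ 2 * a j ^ 4 ≤
      ∑ p ∈ Finset.range r ×ˢ Finset.range r with p.1 + 2 ≤ p.2 ∨ p.2 + 2 ≤ p.1,
        a p.1 ^ 2 * a p.2 ^ 4 := by
    rw [Finset.sum_filter, Finset.sum_filter, Finset.sum_product_right]
    exact Finset.single_le_sum (f := fun j ↦ ∑ i ∈ Finset.range r,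
      if i + 2 ≤ j ∨ j + 2 ≤ i then a i ^ 2 * a j ^ 4 else 0)
      (fun j _ ↦ Finset.sum_nonneg fun i _ ↦ by split_ifs <;> positivity) hj
  have pow_six_le : a j ^ 6 ≤ ∑ i ∈ Finset.range r, a i ^ 6 :=
    Finset.single_le_sum (f := fun i ↦ a i ^ 6) (fun i _ ↦ pow_nonneg (ha i) 6) hj
  have separated := sum_separated_pow_six_le_of_forall_le ha hmax
  have adjacent := sum_adjacent_le_of_forall_le (ha j) hmax
  rw [← Finset.sum_filter_add_sum_filter_not _ fun i ↦ i + 2 ≤ j ∨ j + 2 ≤ i]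
  set S := ∑ i ∈ Finset.range r with i + 2 ≤ j ∨ j + 2 ≤ i, a i
  set A := ∑ i ∈ Finset.range r with ¬(i + 2 ≤ j ∨ j + 2 ≤ i), a i
  have hS : 0 ≤ S := Finset.sum_nonneg fun i _ ↦ ha i
  have hA : 0 ≤ A := Finset.sum_nonneg fun i _ ↦ ha i
  calc (S + A) ^ 6 ≤ 32 * (S ^ 6 + A ^ 6) := by
        have h := add_pow_le hS hA 6
        norm_num only at h
        exact h
    _ ≤ 32 * (r ^ 5 * ∑ i ∈ Finset.range r with i + 2 ≤ j ∨ j + 2 ≤ i, a i ^ 2 * a j ^ 4 +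
          (3 * a j) ^ 6) := by gcongr
    _ = 32 * 729 * a j ^ 6 +
          32 * r ^ 5 * ∑ i ∈ Finset.range r with i + 2 ≤ j ∨ j + 2 ≤ i, a i ^ 2 * a j ^ 4 := by ring
    _ ≤ _ := by gcongr

end BroadNarrow

section Blocks

variable {X : Type*}

/-- The sum of the family `f` over the block of `l` consecutive indices starting at `a`. -/
def blockSum (f : ℕ → X → ℂ) (a l : ℕ) (x : X) : ℂ := ∑ n ∈ Finset.Ico a (a + l), f n x

theorem blockSum_mul (f : ℕ → X → ℂ) (a l t : ℕ) (x : X) :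
    blockSum f a (l * t) x = ∑ i ∈ Finset.range t, blockSum f (a + i * l) l x := by
  induction t with
  | zero => simp [blockSum]
  | succ t ih =>
    rw [Finset.sum_range_succ, ← ih, mul_comm t l]
    simp only [blockSum]
    rw [Finset.sum_Ico_consecutive _ (by omega) (by omega), Nat.mul_succ, add_assoc]

theorem norm_blockSum_mul_le (f : ℕ → X → ℂ) (a l t : ℕ) (x : X) :
    ‖blockSum f a (l * t) x‖ ≤ ∑ i ∈ Finset.range t, ‖blockSum f (a + i * l) l x‖ := by
  rw [blockSum_mul]
  exact norm_sum_le _ _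

variable [MeasurableSpace X] {μ : Measure X} {f : ℕ → X → ℂ}

/-- The sixth moment of a block. -/
def sixthMoment (μ : Measure X) (f : ℕ → X → ℂ) (a l : ℕ) : ℝ :=
  ∫ x, ‖blockSum f a l x‖ ^ 6 ∂μ

/-- The mixed sixth moment of two blocks: the square of the block of length `l` at `a` against the
fourth power of the block of length `b` at `c`. -/
def bilinearMoment (μ : Measure X) (f : ℕ → X → ℂ) (a l c b : ℕ) : ℝ :=
  ∫ x, ‖blockSum f a l x‖ ^ 2 * ‖blockSum f c b x‖ ^ 4 ∂μ

theorem sixthMoment_nonneg (μ : Measure X) (f : ℕ → X → ℂ) (a l : ℕ) : 0 ≤ sixthMoment μ f a l :=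
  integral_nonneg fun x ↦ by positivity

theorem bilinearMoment_nonneg (μ : Measure X) (f : ℕ → X → ℂ) (a l c b : ℕ) :
    0 ≤ bilinearMoment μ f a l c b :=
  integral_nonneg fun x ↦ by positivity

theorem memLp_blockSum {p : ENNReal} (hf : ∀ n, MemLp (f n) p μ) (a l : ℕ) :
    MemLp (blockSum f a l) p μ :=
  memLp_finsetSum _ fun n _ ↦ hf n

theorem integrable_norm_blockSum_pow_six (hf : ∀ n, MemLp (f n) 6 μ) (a l : ℕ) :
    Integrable (fun x ↦ ‖blockSum f a l x‖ ^ 6) μ :=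
  (memLp_blockSum hf a l).integrable_norm_pow (p := 6) (by norm_num)

theorem integrable_norm_blockSum_sq_mul_norm_blockSum_pow_four (hf : ∀ n, MemLp (f n) 6 μ)
    (a l c b : ℕ) : Integrable (fun x ↦ ‖blockSum f a l x‖ ^ 2 * ‖blockSum f c b x‖ ^ 4) μ :=
  integrable_norm_sq_mul_norm_pow_four (memLp_blockSum hf a l) (memLp_blockSum hf c b)

theorem sq_bilinearMoment_le (hf : ∀ n, MemLp (f n) 6 μ) (a l c b : ℕ) :
    bilinearMoment μ f a l c b ^ 2 ≤ bilinearMoment μ f c b a l * sixthMoment μ f c b :=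
  sq_integral_norm_sq_mul_norm_pow_four_le (memLp_blockSum hf a l) (memLp_blockSum hf c b)

theorem bilinearMoment_le_of_sixthMoment_le (hf : ∀ n, MemLp (f n) 6 μ) {a l c b : ℕ}
    {K A B : ℝ} (hK : 0 ≤ K) (hA : 0 ≤ A) (ha : sixthMoment μ f a l ≤ K * A ^ 3)
    (hc : sixthMoment μ f c b ≤ K * B ^ 3) : bilinearMoment μ f a l c b ≤ K * A * B ^ 2 := by
  have := sixthMoment_nonneg μ f c b
  refine le_of_pow_le_pow_left₀ three_ne_zero (by positivity) ?_
  calc bilinearMoment μ f a l c b ^ 3 ≤ sixthMoment μ f a l * sixthMoment μ f c b ^ 2 :=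
        integral_norm_sq_mul_norm_pow_four_pow_three_le (memLp_blockSum hf a l)
          (memLp_blockSum hf c b)
    _ ≤ (K * A ^ 3) * (K * B ^ 3) ^ 2 := by gcongr
    _ = (K * A * B ^ 2) ^ 3 := by ring

theorem sixthMoment_mul_le (hf : ∀ n, MemLp (f n) 6 μ) {a l r : ℕ} {V : ℝ}
    (hV : ∀ i < r, sixthMoment μ f (a + i * l) l ≤ V) :
    sixthMoment μ f a (l * r) ≤ r ^ 6 * V := by
  have hint (i : ℕ) := integrable_norm_blockSum_pow_six hf (a + i * l) l
  calc sixthMoment μ f a (l * r)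
      ≤ ∫ x, r ^ 5 * ∑ i ∈ Finset.range r, ‖blockSum f (a + i * l) l x‖ ^ 6 ∂μ := by
        refine integral_mono (integrable_norm_blockSum_pow_six hf _ _)
          ((integrable_finsetSum _ fun i _ ↦ hint i).const_mul _) fun x ↦ ?_
        calc ‖blockSum f a (l * r) x‖ ^ 6
            ≤ (∑ i ∈ Finset.range r, ‖blockSum f (a + i * l) l x‖) ^ 6 := by
              gcongr
              exact norm_blockSum_mul_le f a l r x
          _ ≤ _ := by
              simpa using pow_sum_le_card_mul_sum_pow (s := Finset.range r)
                (f := fun i ↦ ‖blockSum f (a + i * l) l x‖) (fun i _ ↦ norm_nonneg _) 5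
    _ = r ^ 5 * ∑ i ∈ Finset.range r, sixthMoment μ f (a + i * l) l := by
        rw [integral_const_mul, integral_finsetSum _ fun i _ ↦ hint i]
        rfl
    _ ≤ r ^ 5 * ∑ _i ∈ Finset.range r, V := by
        gcongr with i hi
        exact hV i (Finset.mem_range.mp hi)
    _ = r ^ 6 * V := by
        rw [Finset.sum_const, Finset.card_range, nsmul_eq_mul]
        ring

theorem sixthMoment_mul_le_sum_broad_narrow (hf : ∀ n, MemLp (f n) 6 μ) (a l r : ℕ) :
    sixthMoment μ f a (l * r) ≤
      32 * 729 * ∑ i ∈ Finset.range r, sixthMoment μ f (a + i * l) l +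
        32 * r ^ 5 *
          ∑ p ∈ Finset.range r ×ˢ Finset.range r with p.1 + 2 ≤ p.2 ∨ p.2 + 2 ≤ p.1,
            bilinearMoment μ f (a + p.1 * l) l (a + p.2 * l) l := by
  let S (i : ℕ) : X → ℂ := blockSum f (a + i * l) l
  set separated := {p ∈ Finset.range r ×ˢ Finset.range r | p.1 + 2 ≤ p.2 ∨ p.2 + 2 ≤ p.1}
  have hint₁ : Integrable (fun x ↦ 32 * 729 * ∑ i ∈ Finset.range r, ‖S i x‖ ^ 6) μ :=
    (integrable_finsetSum _ fun i _ ↦ integrable_norm_blockSum_pow_six hf _ _).const_mul _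
  have hint₂ : Integrable
      (fun x ↦ 32 * r ^ 5 * ∑ p ∈ separated, ‖S p.1 x‖ ^ 2 * ‖S p.2 x‖ ^ 4) μ :=
    (integrable_finsetSum _ fun p _ ↦
      integrable_norm_blockSum_sq_mul_norm_blockSum_pow_four hf _ _ _ _).const_mul _
  calc sixthMoment μ f a (l * r)
      ≤ ∫ x, 32 * 729 * ∑ i ∈ Finset.range r, ‖S i x‖ ^ 6 +
          32 * r ^ 5 * ∑ p ∈ separated, ‖S p.1 x‖ ^ 2 * ‖S p.2 x‖ ^ 4 ∂μ := by
        refine integral_mono (integrable_norm_blockSum_pow_six hf _ _) (hint₁.add hint₂) fun x ↦ ?_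
        refine le_trans ?_ (sum_pow_six_le_broad_narrow r fun i ↦ norm_nonneg (S i x))
        gcongr
        exact norm_blockSum_mul_le f a l r x
    _ = 32 * 729 * ∑ i ∈ Finset.range r, sixthMoment μ f (a + i * l) l + 32 * r ^ 5 *
          ∑ p ∈ separated, bilinearMoment μ f (a + p.1 * l) l (a + p.2 * l) l := by
        rw [integral_add hint₁ hint₂, integral_const_mul, integral_const_mul,
          integral_finsetSum _ fun i _ ↦ integrable_norm_blockSum_pow_six hf _ _,
          integral_finsetSum _ fun p _ ↦
            integrable_norm_blockSum_sq_mul_norm_blockSum_pow_four hf _ _ _ _]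
        rfl

theorem sixthMoment_mul_le_broad_narrow (hf : ∀ n, MemLp (f n) 6 μ) {a l r : ℕ} {V W : ℝ}
    (hW : 0 ≤ W) (hV : ∀ i < r, sixthMoment μ f (a + i * l) l ≤ V)
    (hVW : ∀ i < r, ∀ j < r, i + 2 ≤ j ∨ j + 2 ≤ i →
      bilinearMoment μ f (a + i * l) l (a + j * l) l ≤ W) :
    sixthMoment μ f a (l * r) ≤ 32 * 729 * (r * V) + 32 * (r ^ 7 * W) := by
  calc sixthMoment μ f a (l * r)
      ≤ 32 * 729 * ∑ i ∈ Finset.range r, sixthMoment μ f (a + i * l) l + 32 * r ^ 5 *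
          ∑ p ∈ Finset.range r ×ˢ Finset.range r with p.1 + 2 ≤ p.2 ∨ p.2 + 2 ≤ p.1,
            bilinearMoment μ f (a + p.1 * l) l (a + p.2 * l) l :=
        sixthMoment_mul_le_sum_broad_narrow hf a l r
    _ ≤ 32 * 729 * ∑ _i ∈ Finset.range r, V +
          32 * r ^ 5 * ∑ _p ∈ Finset.range r ×ˢ Finset.range r, W := by
        gcongr with _ hi
        · exact hV _ (Finset.mem_range.mp hi)
        · refine (Finset.sum_le_sum fun p hp ↦ ?_).trans
            (Finset.sum_le_sum_of_subset_of_nonneg (Finset.filter_subset _ _) fun _ _ _ ↦ hW)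
          simp only [Finset.mem_filter, Finset.mem_product, Finset.mem_range] at hp
          exact hVW p.1 hp.1.1 p.2 hp.1.2 hp.2
    _ = 32 * 729 * (r * V) + 32 * (r ^ 7 * W) := by
        simp only [Finset.sum_const, Finset.card_product, Finset.card_range, nsmul_eq_mul,
          Nat.cast_mul]
        ring

end Blocks

/-- Two triples of indices `(n, m₁, m₂)` and `(n', m₁', m₂')`, as they occur in the expansion of
`(S * T * T) * conj (S' * T * T)` for exponential sums `S`, `S'` and `T`. -/
structure Sextuple where
  n : ℕ
  m₁ : ℕ
  m₂ : ℕ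
  n' : ℕ
  m₁' : ℕ
  m₂' : ℕ

namespace Sextuple

/-- The inner product in `L²(μ)` of the products of the members of `f` indexed by the two
triples. -/
def correlation {X : Type*} [MeasurableSpace X] (q : Sextuple) (μ : Measure X)
    (f : ℕ → X → ℂ) : ℂ :=
  ∫ x, f q.n x * f q.m₁ x * f q.m₂ x * conj (f q.n' x * f q.m₁' x * f q.m₂' x) ∂μ

/-- All `m`s lie in a window of length `b`, both `n`s lie within `H` of this window, and they lie
on the same side of it, at distance at least `d`. -/
structure IsTransverse (q : Sextuple) (H b d : ℕ) : Prop where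
  abs_m₂_sub_lt : |(q.m₂ : ℤ) - q.m₁| < b
  abs_m₁'_sub_lt : |(q.m₁' : ℤ) - q.m₁| < b
  abs_m₂'_sub_lt : |(q.m₂' : ℤ) - q.m₁| < b
  abs_n_sub_lt : |(q.n : ℤ) - q.m₁| < H
  abs_n'_sub_lt : |(q.n' : ℤ) - q.m₁| < H
  gap : q.m₁ + d ≤ q.n ∧ q.m₁ + d ≤ q.n' ∨ q.n + d ≤ q.m₁ ∧ q.n' + d ≤ q.m₁

end Sextuple

/-- The orthogonality fed into the iteration: for windows of length `b` between `M` and `H`, the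
correlation of a transverse sextuple vanishes as soon as `n` and `n'` are more than `C * b ^ 2 / d`
apart. -/
def TransverseOrthogonality {X : Type*} [MeasurableSpace X] (μ : Measure X) (f : ℕ → X → ℂ)
    (M H : ℕ) (C : ℝ) : Prop :=
  ∀ (q : Sextuple) (b d : ℕ), M ≤ b → b ≤ H → q.IsTransverse H b d →
    C * b ^ 2 < d * |(q.n : ℝ) - q.n'| → q.correlation μ f = 0

theorem mul_add_self_le_mul_of_lt {i t : ℕ} (l : ℕ) (hi : i < t) : i * l + l ≤ l * t := by
  rw [← Nat.succ_mul, mul_comm]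
  exact Nat.mul_le_mul_left l hi

/-- The blocks of lengths `l` at `a` and `b` at `c` lie in a common interval of length `H` and are
separated by a gap of length at least `d`. -/
structure SeparatedBlocks (H d a l c b : ℕ) : Prop where
  add_le_add_left : a + l ≤ c + H
  add_le_add_right : c + b ≤ a + H
  gap : a + l + d ≤ c ∨ c + b + d ≤ a

namespace SeparatedBlocks

variable {H d a l c b : ℕ}

theorem symm (h : SeparatedBlocks H d a l c b) : SeparatedBlocks H d c b a l :=
  ⟨h.add_le_add_right, h.add_le_add_left, h.gap.symm⟩

theorem length_le (h : SeparatedBlocks H d a l c b) : b ≤ H := by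
  obtain ⟨h₁, h₂, h₃⟩ := h
  omega

theorem subblock {t i : ℕ} (h : SeparatedBlocks H d a (l * t) c b) (hi : i < t) :
    SeparatedBlocks H d (a + i * l) l c b := by
  have := mul_add_self_le_mul_of_lt l hi
  obtain ⟨h₁, h₂, h₃⟩ := h
  constructor <;> omega

theorem isTransverse (h : SeparatedBlocks H d a l c b) {q : Sextuple}
    (hn : q.n ∈ Finset.Ico a (a + l)) (hn' : q.n' ∈ Finset.Ico a (a + l))
    (hm₁ : q.m₁ ∈ Finset.Ico c (c + b)) (hm₂ : q.m₂ ∈ Finset.Ico c (c + b))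
    (hm₁' : q.m₁' ∈ Finset.Ico c (c + b)) (hm₂' : q.m₂' ∈ Finset.Ico c (c + b)) :
    q.IsTransverse H b d := by
  obtain ⟨h₁, h₂, h₃⟩ := h
  rw [Finset.mem_Ico] at *
  constructor <;> (try rw [abs_lt]) <;> omega

theorem of_add_two_le {r i j : ℕ} (hH : l * r ≤ H) (hi : i < r) (hj : j < r)
    (hij : i + 2 ≤ j ∨ j + 2 ≤ i) : SeparatedBlocks H l (a + i * l) l (a + j * l) l := by
  have := mul_add_self_le_mul_of_lt l hi
  have := mul_add_self_le_mul_of_lt l hj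
  refine ⟨by omega, by omega, hij.imp (fun hij ↦ ?_) fun hij ↦ ?_⟩ <;> nlinarith

end SeparatedBlocks

section CrossBlocks

variable {X : Type*} [MeasurableSpace X] {μ : Measure X} {f : ℕ → X → ℂ}

theorem integral_blockSum_mul_conj_eq_zero (hf : ∀ n, MemLp (f n) 6 μ) {a a' l c b : ℕ}
    (hcorr : ∀ q : Sextuple, q.n ∈ Finset.Ico a (a + l) → q.n' ∈ Finset.Ico a' (a' + l) →
      q.m₁ ∈ Finset.Ico c (c + b) → q.m₂ ∈ Finset.Ico c (c + b) →
      q.m₁' ∈ Finset.Ico c (c + b) → q.m₂' ∈ Finset.Ico c (c + b) → q.correlation μ f = 0) :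
    ∫ x, blockSum f a l x * blockSum f c b x * blockSum f c b x *
      conj (blockSum f a' l x * blockSum f c b x * blockSum f c b x) ∂μ = 0 := by
  let u (p : ℕ × ℕ × ℕ) (x : X) : ℂ := f p.1 x * f p.2.1 x * f p.2.2 x
  have hu (p : ℕ × ℕ × ℕ) : MemLp (u p) 2 μ := memLp_two_mul_mul (hf _) (hf _) (hf _)
  have expand (a : ℕ) (x : X) : blockSum f a l x * blockSum f c b x * blockSum f c b x =
      ∑ p ∈ Finset.Ico a (a + l) ×ˢ Finset.Ico c (c + b) ×ˢ Finset.Ico c (c + b), u p x := by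
    simp only [blockSum, u, Finset.sum_product, ← Finset.mul_sum, ← Finset.sum_mul]
  have hint (p p' : ℕ × ℕ × ℕ) : Integrable (fun x ↦ u p x * conj (u p' x)) μ :=
    (hu p).integrable_mul (hu p').star
  simp_rw [expand, map_sum, Finset.sum_mul_sum]
  rw [integral_finsetSum _ fun p _ ↦ integrable_finsetSum _ fun p' _ ↦ hint p p']
  refine Finset.sum_eq_zero fun p hp ↦ ?_
  rw [integral_finsetSum _ fun p' _ ↦ hint p p']
  refine Finset.sum_eq_zero fun p' hp' ↦ ?_
  simp only [Finset.mem_product] at hp hp'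
  exact hcorr ⟨p.1, p.2.1, p.2.2, p'.1, p'.2.1, p'.2.2⟩ hp.1 hp'.1 hp.2.1 hp.2.2 hp'.2.1 hp'.2.2

theorem bilinearMoment_mul_le (hf : ∀ n, MemLp (f n) 6 μ) {a l t c b T : ℕ}
    (horth : ∀ i < t, ∀ j < t, i + T < j ∨ j + T < i →
      ∫ x, blockSum f (a + i * l) l x * blockSum f c b x * blockSum f c b x *
        conj (blockSum f (a + j * l) l x * blockSum f c b x * blockSum f c b x) ∂μ = 0) :
    bilinearMoment μ f a (l * t) c b ≤
      (2 * T + 1) * ∑ i ∈ Finset.range t, bilinearMoment μ f (a + i * l) l c b := by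
  classical
  let F (i : ℕ) (x : X) : ℂ := blockSum f (a + i * l) l x * blockSum f c b x * blockSum f c b x
  have hF (i : ℕ) : MemLp (F i) 2 μ :=
    memLp_two_mul_mul (memLp_blockSum hf _ _) (memLp_blockSum hf _ _) (memLp_blockSum hf _ _)
  have norm_sq (u v : ℂ) : ‖u * v * v‖ ^ 2 = ‖u‖ ^ 2 * ‖v‖ ^ 4 := by
    simp only [norm_mul]
    ring
  have card_le (i : ℕ) (hi : i ∈ Finset.range t) :
      {j ∈ Finset.range t | ∫ x, F i x * conj (F j x) ∂μ ≠ 0}.card ≤ 2 * T + 1 := by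
    calc {j ∈ Finset.range t | ∫ x, F i x * conj (F j x) ∂μ ≠ 0}.card
        ≤ (Finset.Icc (i - T) (i + T)).card := Finset.card_le_card fun j hj ↦ by
          obtain ⟨hjt, hj⟩ := Finset.mem_filter.mp hj
          have := mt (horth i (Finset.mem_range.mp hi) j (Finset.mem_range.mp hjt)) hj
          rw [Finset.mem_Icc]
          omega
      _ ≤ 2 * T + 1 := by rw [Nat.card_Icc]; omega
  have h := integral_norm_sum_sq_le_of_card_integral_mul_conj_ne_zero_le _ hF _ card_le
  simp only [F, ← Finset.sum_mul, ← blockSum_mul, norm_sq] at h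
  exact_mod_cast h

theorem TransverseOrthogonality.bilinearMoment_mul_le {M H : ℕ} {C : ℝ}
    (h : TransverseOrthogonality μ f M H C) (hf : ∀ n, MemLp (f n) 6 μ) {d a l t c b T : ℕ}
    (hsep : SeparatedBlocks H d a (l * t) c b) (hd : 0 < d) (hMb : M ≤ b)
    (hC : C * b ^ 2 ≤ d * (T * l)) :
    bilinearMoment μ f a (l * t) c b ≤
      (2 * T + 1) * ∑ i ∈ Finset.range t, bilinearMoment μ f (a + i * l) l c b := by
  refine _root_.bilinearMoment_mul_le hf fun i hi j hj hij ↦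
    integral_blockSum_mul_conj_eq_zero hf fun q hn hn' hm₁ hm₂ hm₁' hm₂' ↦ ?_
  have mem_block {i n : ℕ} (hi : i < t) (hn : n ∈ Finset.Ico (a + i * l) (a + i * l + l)) :
      n ∈ Finset.Ico a (a + l * t) := by
    have := mul_add_self_le_mul_of_lt l hi
    rw [Finset.mem_Ico] at *
    omega
  have lt_abs : (T * l : ℝ) < |(q.n : ℝ) - q.n'| := by
    have lt_abs' : (T * l : ℤ) < |(q.n : ℤ) - q.n'| := by
      rw [Finset.mem_Ico] at hn hn'
      rw [lt_abs]
      zify at *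
      obtain hij | hij := hij
      · right; nlinarith
      · left; nlinarith
    exact_mod_cast lt_abs'
  refine h q b d hMb hsep.length_le
    (hsep.isTransverse (mem_block hi hn) (mem_block hj hn') hm₁ hm₂ hm₁' hm₂') ?_
  have : (0 : ℝ) < d := by exact_mod_cast hd
  exact hC.trans_lt (by gcongr)

end CrossBlocks

section Iteration

variable {X : Type*} [MeasurableSpace X] {μ : Measure X} {f : ℕ → X → ℂ} {M H r : ℕ} {C : ℝ}

theorem bilinearMoment_le_of_swap (hf : ∀ n, MemLp (f n) 6 μ) {a l c b : ℕ} {L B K u v w : ℝ}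
    (hL : 0 ≤ L) (hK : 0 ≤ K) (hw : 0 ≤ w) (huvw : u * v ≤ w ^ 2)
    (hswap : bilinearMoment μ f c b a l ≤ B * L ^ 2 * (K * u))
    (hsixth : sixthMoment μ f c b ≤ B ^ 3 * (K * v)) :
    bilinearMoment μ f a l c b ≤ L * B ^ 2 * (K * w) := by
  refine le_of_pow_le_pow_left₀ two_ne_zero (by positivity) ?_
  have := sixthMoment_nonneg μ f c b
  calc bilinearMoment μ f a l c b ^ 2
      ≤ bilinearMoment μ f c b a l * sixthMoment μ f c b := sq_bilinearMoment_le hf a l c b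
    _ ≤ (B * L ^ 2 * (K * u)) * (B ^ 3 * (K * v)) :=
        mul_le_mul hswap hsixth this ((bilinearMoment_nonneg μ f c b a l).trans hswap)
    _ = B ^ 4 * L ^ 2 * K ^ 2 * (u * v) := by ring
    _ ≤ B ^ 4 * L ^ 2 * K ^ 2 * w ^ 2 := by gcongr
    _ = (L * B ^ 2 * (K * w)) ^ 2 := by ring

theorem mul_sq_mul_pow_sub_le (M : ℕ) (hCr : C ≤ r) {p τ : ℕ} (hτ : 1 ≤ τ) (hp : 2 * τ ≤ p) :
    C * ((M : ℝ) * r ^ (p - τ)) ^ 2 ≤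
      (M : ℝ) * r ^ (p - 1) * ((r : ℝ) ^ 2 * (M * r ^ (p - 2 * τ))) := by
  have exponent_eq : (p - τ) * 2 = 1 + (p - 1) + (p - 2 * τ) := by omega
  calc C * ((M : ℝ) * r ^ (p - τ)) ^ 2
      ≤ r * ((M : ℝ) * r ^ (p - τ)) ^ 2 := by gcongr
    _ = (M : ℝ) * r ^ (p - 1) * ((r : ℝ) ^ 2 * (M * r ^ (p - 2 * τ))) := by
        rw [mul_pow, ← pow_mul, exponent_eq, pow_add, pow_add]
        ring

theorem TransverseOrthogonality.bilinearMoment_le_of_forall_subblock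
    (h : TransverseOrthogonality μ f M H C) (hf : ∀ n, MemLp (f n) 6 μ) (hM : 0 < M)
    (hCr : C ≤ r) (hr : 3 ≤ r) {p σ τ : ℕ} (hτ : 1 ≤ τ) (hστ : σ ≤ 2 * τ) (hp : 2 * τ ≤ p)
    {a c : ℕ} (hsep : SeparatedBlocks H (M * r ^ (p - 1)) a (M * r ^ (p - σ)) c (M * r ^ (p - τ)))
    {W : ℝ} (hW0 : 0 ≤ W) (hW : ∀ a', SeparatedBlocks H (M * r ^ (p - 1)) a' (M * r ^ (p - 2 * τ)) c
      (M * r ^ (p - τ)) →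
      bilinearMoment μ f a' (M * r ^ (p - 2 * τ)) c (M * r ^ (p - τ)) ≤ r ^ (p - 2 * τ) * W) :
    bilinearMoment μ f a (M * r ^ (p - σ)) c (M * r ^ (p - τ)) ≤ r ^ (p - σ) * (r ^ 3 * W) := by
  have hr0 : 0 < r := by omega
  have length_eq : M * r ^ (p - σ) = M * r ^ (p - 2 * τ) * r ^ (2 * τ - σ) := by
    rw [mul_assoc, ← pow_add, show p - 2 * τ + (2 * τ - σ) = p - σ by omega]
  -- The gap is at least `M * r ^ (p - 1)`, so orthogonality sets in at distance
  -- `C * M * r ^ (p + 1 - 2 * τ)`, which is at most `r ^ 2` subblocks.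
  have gap_le : C * ((M * r ^ (p - τ) : ℕ) : ℝ) ^ 2 ≤
      (M * r ^ (p - 1) : ℕ) * ((r ^ 2 : ℕ) * (M * r ^ (p - 2 * τ) : ℕ)) := by
    exact_mod_cast mul_sq_mul_pow_sub_le M hCr hτ hp
  rw [length_eq] at hsep ⊢
  calc bilinearMoment μ f a (M * r ^ (p - 2 * τ) * r ^ (2 * τ - σ)) c (M * r ^ (p - τ))
      ≤ (2 * (r ^ 2 : ℕ) + 1) * ∑ i ∈ Finset.range (r ^ (2 * τ - σ)), bilinearMoment μ f
          (a + i * (M * r ^ (p - 2 * τ))) (M * r ^ (p - 2 * τ)) c (M * r ^ (p - τ)) :=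
        h.bilinearMoment_mul_le hf hsep (by positivity)
          (Nat.le_mul_of_pos_right M (by positivity)) gap_le
    _ ≤ (2 * (r ^ 2 : ℕ) + 1) * ∑ _i ∈ Finset.range (r ^ (2 * τ - σ)), r ^ (p - 2 * τ) * W := by
        gcongr with _ hi
        exact hW _ (hsep.subblock (Finset.mem_range.mp hi))
    _ = r ^ (p - σ) * ((2 * r ^ 2 + 1) * W) := by
        rw [Finset.sum_const, Finset.card_range, nsmul_eq_mul,
          show p - σ = p - 2 * τ + (2 * τ - σ) by omega, pow_add]
        push_cast
        ring
    _ ≤ r ^ (p - σ) * (r ^ 3 * W) := by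
        have three_le_r : (3 : ℝ) ≤ r := by exact_mod_cast hr
        gcongr
        nlinarith

theorem bilinearMoment_le_of_forall_sixthMoment_le (hf : ∀ n, MemLp (f n) 6 μ) (hr : 1 ≤ r)
    {p : ℕ} {K u : ℝ} (hK : 0 ≤ K) (hu : 1 ≤ u)
    (hsixth : ∀ q < p, ∀ a, sixthMoment μ f a (M * r ^ q) ≤ (r ^ q : ℝ) ^ 3 * (K * u ^ (2 * q)))
    {q q' : ℕ} (hq : q < p) (hq' : q' < p) (a c : ℕ) :
    bilinearMoment μ f a (M * r ^ q) c (M * r ^ q') ≤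
      r ^ q * (r ^ q' : ℝ) ^ 2 * (K * (r ^ 6 * u ^ (2 * p))) := by
  have one_le_r : (1 : ℝ) ≤ r := by exact_mod_cast hr
  have sixth_le (q : ℕ) (hq : q < p) (a : ℕ) :
      sixthMoment μ f a (M * r ^ q) ≤ K * u ^ (2 * p) * (r ^ q : ℝ) ^ 3 := by
    refine (hsixth q hq a).trans ?_
    rw [mul_comm]
    gcongr
  calc bilinearMoment μ f a (M * r ^ q) c (M * r ^ q')
      ≤ K * u ^ (2 * p) * r ^ q * (r ^ q' : ℝ) ^ 2 :=
        bilinearMoment_le_of_sixthMoment_le hf (by positivity) (by positivity)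
          (sixth_le q hq a) (sixth_le q' hq' c)
    _ = r ^ q * (r ^ q' : ℝ) ^ 2 * (K * (1 * u ^ (2 * p))) := by ring
    _ ≤ r ^ q * (r ^ q' : ℝ) ^ 2 * (K * (r ^ 6 * u ^ (2 * p))) := by
        gcongr
        exact one_le_pow₀ one_le_r

theorem TransverseOrthogonality.bilinearMoment_le (h : TransverseOrthogonality μ f M H C)
    (hf : ∀ n, MemLp (f n) 6 μ) (hM : 0 < M) (hCr : C ≤ r) (hr : 3 ≤ r) {p : ℕ} {K u : ℝ}
    (hK : 0 ≤ K) (hu : 1 ≤ u)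
    (hsixth : ∀ q < p, ∀ a, sixthMoment μ f a (M * r ^ q) ≤ (r ^ q : ℝ) ^ 3 * (K * u ^ (2 * q)))
    (m : ℕ) {σ τ : ℕ} (hσ : 1 ≤ σ) (hστ : σ ≤ 2 * τ) (hp : 2 ^ m * τ ≤ p) {a c : ℕ}
    (hsep : SeparatedBlocks H (M * r ^ (p - 1)) a (M * r ^ (p - σ)) c (M * r ^ (p - τ))) :
    bilinearMoment μ f a (M * r ^ (p - σ)) c (M * r ^ (p - τ)) ≤
      r ^ (p - σ) * (r ^ (p - τ) : ℝ) ^ 2 * (K * (r ^ 6 * u ^ (2 * p) / u ^ (τ * m))) := by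
  have hτ : 1 ≤ τ := by omega
  have hp1 : 1 ≤ p := le_trans (Nat.mul_pos (by positivity) hτ) hp
  induction m generalizing σ τ a c with
  | zero =>
    simpa using bilinearMoment_le_of_forall_sixthMoment_le hf (by omega) hK hu hsixth
      (by omega : p - σ < p) (by omega : p - τ < p) a c
  | succ m ih =>
    have hp' : 2 ^ m * (2 * τ) ≤ p := by rwa [← mul_assoc, ← pow_succ]
    have h2τ : 2 * τ ≤ p := (Nat.le_mul_of_pos_left _ (by positivity)).trans hp'
    obtain ⟨e, rfl⟩ : ∃ e, p = τ + e := ⟨p - τ, by omega⟩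
    calc bilinearMoment μ f a (M * r ^ (τ + e - σ)) c (M * r ^ (τ + e - τ))
        ≤ r ^ (τ + e - σ) * (r ^ 3 * ((r ^ (τ + e - τ) : ℝ) ^ 2 *
            (K * (r ^ 3 * u ^ (2 * (τ + e)) / u ^ (τ * (m + 1)))))) := by
          refine h.bilinearMoment_le_of_forall_subblock hf hM hCr hr hτ hστ h2τ hsep (by positivity)
            fun a' hsep' ↦ ?_
          rw [← mul_assoc]
          refine bilinearMoment_le_of_swap hf (by positivity) hK (by positivity) (le_of_eq ?_)
            (ih hτ (by omega) hp' hsep'.symm (by omega)) (hsixth (τ + e - τ) (by omega) c)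
          rw [Nat.add_sub_cancel_left]
          field_simp
          ring
      _ = _ := by ring

theorem TransverseOrthogonality.sixthMoment_succ_le (h : TransverseOrthogonality μ f M H C)
    (hf : ∀ n, MemLp (f n) 6 μ) (hM : 0 < M) (hCr : C ≤ r) (hr : 160 ≤ r) {K u : ℝ}
    (hK : 0 ≤ K) (hu : 1 ≤ u) {m p : ℕ} (hru : (r : ℝ) ^ 13 ≤ u ^ m) (hmp : 2 ^ m ≤ p + 1)
    (hp : M * r ^ (p + 1) ≤ H)
    (hsixth : ∀ q ≤ p, ∀ a, sixthMoment μ f a (M * r ^ q) ≤ (r ^ q : ℝ) ^ 3 * (K * u ^ (2 * q)))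
    (a : ℕ) :
    sixthMoment μ f a (M * r ^ (p + 1)) ≤ (r ^ (p + 1) : ℝ) ^ 3 * (K * u ^ (2 * (p + 1))) := by
  have hr' : (160 : ℝ) ≤ r := by exact_mod_cast hr
  have hH : M * r ^ p * r ≤ H := by rwa [mul_assoc, ← pow_succ]
  have bilinear_le {i j : ℕ} (hi : i < r) (hj : j < r) (hij : i + 2 ≤ j ∨ j + 2 ≤ i) :
      bilinearMoment μ f (a + i * (M * r ^ p)) (M * r ^ p) (a + j * (M * r ^ p)) (M * r ^ p) ≤
        r ^ p * (r ^ p : ℝ) ^ 2 * (K * (r ^ 6 * u ^ (2 * (p + 1)) / r ^ 13)) := by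
    refine (h.bilinearMoment_le hf hM hCr (by omega) hK hu
      (fun q hq ↦ hsixth q (Nat.lt_succ_iff.mp hq)) m (p := p + 1) (σ := 1) (τ := 1) le_rfl
      one_le_two (by omega) (.of_add_two_le hH hi hj hij)).trans ?_
    rw [one_mul, Nat.add_sub_cancel]
    gcongr
  rw [pow_succ r p, ← mul_assoc]
  calc sixthMoment μ f a (M * r ^ p * r)
      ≤ 32 * 729 * (r * ((r ^ p : ℝ) ^ 3 * (K * u ^ (2 * (p + 1))))) +
          32 * (r ^ 7 *
            (r ^ p * (r ^ p : ℝ) ^ 2 * (K * (r ^ 6 * u ^ (2 * (p + 1)) / r ^ 13)))) := by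
        refine sixthMoment_mul_le_broad_narrow hf (by positivity) (fun i _ ↦ ?_)
          fun i hi j hj hij ↦ bilinear_le hi hj hij
        refine (hsixth p le_rfl _).trans ?_
        gcongr
        exact p.le_succ
    _ = (32 * 729 * r + 32) * ((r ^ p : ℝ) ^ 3 * (K * u ^ (2 * (p + 1)))) := by
        field_simp
    _ ≤ r ^ 3 * ((r ^ p : ℝ) ^ 3 * (K * u ^ (2 * (p + 1)))) := by
        have : (160 : ℝ) ^ 2 ≤ r ^ 2 := by gcongr
        gcongr
        nlinarith
    _ = (r ^ (p + 1) : ℝ) ^ 3 * (K * u ^ (2 * (p + 1))) := by ring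

theorem TransverseOrthogonality.sixthMoment_le_mul_pow (h : TransverseOrthogonality μ f M H C)
    (hf : ∀ n, MemLp (f n) 6 μ) (hM : 0 < M) (hCr : C ≤ r) (hr : 160 ≤ r) {V u : ℝ}
    (hV : ∀ a, sixthMoment μ f a M ≤ V) (hu : 1 ≤ u) {m : ℕ} (hru : (r : ℝ) ^ 13 ≤ u ^ m)
    {p : ℕ} (hp : M * r ^ p ≤ H) (a : ℕ) :
    sixthMoment μ f a (M * r ^ p) ≤
      (r ^ p : ℝ) ^ 3 * (r ^ (3 * 2 ^ m) * V * u ^ (2 * p)) := by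
  have hV0 : 0 ≤ V := (sixthMoment_nonneg μ f 0 M).trans (hV 0)
  have one_le_r : (1 : ℝ) ≤ r := by exact_mod_cast le_trans (by norm_num) hr
  induction p using Nat.strong_induction_on generalizing a with
  | _ p ih =>
    obtain hpm | hpm := lt_or_ge p (2 ^ m)
    · calc sixthMoment μ f a (M * r ^ p) ≤ (r ^ p : ℕ) ^ 6 * V :=
            sixthMoment_mul_le hf fun i _ ↦ hV _
        _ = (r ^ p : ℝ) ^ 3 * (r ^ (3 * p) * V * 1) := by
            push_cast
            ring
        _ ≤ (r ^ p : ℝ) ^ 3 * (r ^ (3 * 2 ^ m) * V * u ^ (2 * p)) := by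
            gcongr
            exact one_le_pow₀ hu
    · obtain ⟨p, rfl⟩ : ∃ p', p = p' + 1 :=
        Nat.exists_eq_succ_of_ne_zero (Nat.two_pow_pos m |>.trans_le hpm).ne'
      refine h.sixthMoment_succ_le hf hM hCr hr (by positivity) hu hru hpm hp (fun q hq a ↦ ?_) a
      refine ih q (Nat.lt_succ_iff.mpr hq) ?_ a
      exact le_trans (by gcongr <;> omega) hp

theorem TransverseOrthogonality.sixthMoment_le_mul_rpow (h : TransverseOrthogonality μ f M H C)
    (hf : ∀ n, MemLp (f n) 6 μ) (hM : 0 < M) (hCr : C ≤ r) (hr : 160 ≤ r) {V η : ℝ}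
    (hV : ∀ a, sixthMoment μ f a M ≤ V) (hη : 0 < η) {p : ℕ} (hp : M * r ^ p ≤ H) (a : ℕ) :
    sixthMoment μ f a (M * r ^ p) ≤ r ^ (3 * 2 ^ ⌈26 / η⌉₊) * V * (r ^ p : ℝ) ^ (3 + η) := by
  have one_le_r : (1 : ℝ) ≤ r := by exact_mod_cast le_trans (by norm_num) hr
  have hr0 : (0 : ℝ) < r := by positivity
  have pow_le : (r : ℝ) ^ 13 ≤ ((r : ℝ) ^ (η / 2)) ^ ⌈26 / η⌉₊ := by
    have h26 : 26 ≤ ⌈26 / η⌉₊ * η := (div_le_iff₀ hη).mp (Nat.le_ceil _)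
    rw [← rpow_natCast, ← rpow_natCast, ← rpow_mul hr0.le]
    refine rpow_le_rpow_of_exponent_le one_le_r ?_
    push_cast
    linarith
  have h := h.sixthMoment_le_mul_pow hf hM hCr hr hV (one_le_rpow one_le_r (by positivity))
    pow_le hp a
  have pow_eq : ((r : ℝ) ^ (η / 2)) ^ (2 * p) = (r ^ p : ℝ) ^ η := by
    rw [← rpow_natCast, ← rpow_natCast, ← rpow_mul hr0.le, ← rpow_mul hr0.le]
    congr 1
    push_cast
    ring
  rw [pow_eq] at h
  rw [rpow_add (by positivity), show (3 : ℝ) = (3 : ℕ) by norm_num, rpow_natCast]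
  linarith

end Iteration

namespace Sextuple

/-- The failure of a sextuple to solve the degree `k` Vinogradov equation in three plus three
variables. -/
def powerDefect (q : Sextuple) (k : ℕ) : ℤ :=
  (q.n : ℤ) ^ k + (q.m₁ : ℤ) ^ k + (q.m₂ : ℤ) ^ k -
    ((q.n' : ℤ) ^ k + (q.m₁' : ℤ) ^ k + (q.m₂' : ℤ) ^ k)

/-- The set of the six indices of a sextuple. -/
def entries (q : Sextuple) : Finset ℕ := {q.n, q.m₁, q.m₂, q.n', q.m₁', q.m₂'}

variable {q : Sextuple} {H b d : ℕ}

theorem IsTransverse.powerDefect_one_eq_zero (h : q.IsTransverse H b d) (hbH : b ≤ H)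
    (hH : 3 * ((H : ℤ) - 1) ^ 2 < 2 * q.m₁) (hq : q.powerDefect 2 = 0) : q.powerDefect 1 = 0 := by
  have offset_sq_le {i : ℕ} (hi : |(i : ℤ) - q.m₁| < H) :
      ((i : ℤ) - q.m₁) ^ 2 ≤ ((H : ℤ) - 1) ^ 2 := by
    rw [abs_lt] at hi
    exact sq_le_sq' (by omega) (by omega)
  have hbH' : (b : ℤ) ≤ H := by exact_mod_cast hbH
  have n_le := offset_sq_le h.abs_n_sub_lt
  have n'_le := offset_sq_le h.abs_n'_sub_lt
  have m₂_le := offset_sq_le (h.abs_m₂_sub_lt.trans_le hbH')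
  have m₁'_le := offset_sq_le (h.abs_m₁'_sub_lt.trans_le hbH')
  have m₂'_le := offset_sq_le (h.abs_m₂'_sub_lt.trans_le hbH')
  have centered : 2 * (q.m₁ : ℤ) * q.powerDefect 1 =
      ((q.n' : ℤ) - q.m₁) ^ 2 + ((q.m₁' : ℤ) - q.m₁) ^ 2 + ((q.m₂' : ℤ) - q.m₁) ^ 2 -
        (((q.n : ℤ) - q.m₁) ^ 2 + ((q.m₂ : ℤ) - q.m₁) ^ 2) := by
    unfold powerDefect at *
    linear_combination hq
  have abs_lt : |2 * (q.m₁ : ℤ) * q.powerDefect 1| < 2 * q.m₁ := by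
    rw [centered, _root_.abs_lt]
    constructor <;> nlinarith only [n_le, n'_le, m₂_le, m₁'_le, m₂'_le, hH,
      sq_nonneg ((q.n : ℤ) - q.m₁), sq_nonneg ((q.m₂ : ℤ) - q.m₁), sq_nonneg ((q.n' : ℤ) - q.m₁),
      sq_nonneg ((q.m₁' : ℤ) - q.m₁), sq_nonneg ((q.m₂' : ℤ) - q.m₁), sq_nonneg ((H : ℤ) - 1)]
  have hm₁ : 2 * (q.m₁ : ℤ) ≠ 0 := by nlinarith [sq_nonneg ((H : ℤ) - 1)]
  exact (mul_eq_zero_iff_left hm₁).mp (Int.eq_zero_of_abs_lt_dvd (dvd_mul_right _ _) abs_lt)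

theorem IsTransverse.mul_abs_sub_le_sq (h : q.IsTransverse H b d) (hq₁ : q.powerDefect 1 = 0)
    (hq₂ : q.powerDefect 2 = 0) : (d : ℤ) * |(q.n : ℤ) - q.n'| ≤ (b : ℤ) ^ 2 := by
  have offset_sq_le {i : ℕ} (hi : |(i : ℤ) - q.m₁| < b) : ((i : ℤ) - q.m₁) ^ 2 ≤ (b : ℤ) ^ 2 := by
    rw [abs_lt] at hi
    exact sq_le_sq' (by omega) (by omega)
  have m₂_le := offset_sq_le h.abs_m₂_sub_lt
  have m₁'_le := offset_sq_le h.abs_m₁'_sub_lt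
  have m₂'_le := offset_sq_le h.abs_m₂'_sub_lt
  have factored : ((q.n : ℤ) - q.n') * ((q.n - q.m₁) + (q.n' - q.m₁)) =
      ((q.m₁' : ℤ) - q.m₁) ^ 2 + ((q.m₂' : ℤ) - q.m₁) ^ 2 - ((q.m₂ : ℤ) - q.m₁) ^ 2 := by
    unfold powerDefect at *
    linear_combination hq₂ - 2 * q.m₁ * hq₁
  have le_abs_add : 2 * (d : ℤ) ≤ |((q.n : ℤ) - q.m₁) + (q.n' - q.m₁)| := by
    have := h.gap
    rw [le_abs]
    omega
  have : 2 * (d * |(q.n : ℤ) - q.n'|) ≤ 2 * (b : ℤ) ^ 2 := by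
    calc 2 * (d * |(q.n : ℤ) - q.n'|)
        = |(q.n : ℤ) - q.n'| * (2 * d) := by ring
      _ ≤ |(q.n : ℤ) - q.n'| * |((q.n : ℤ) - q.m₁) + (q.n' - q.m₁)| := by gcongr
      _ = |((q.m₁' : ℤ) - q.m₁) ^ 2 + ((q.m₂' : ℤ) - q.m₁) ^ 2 - ((q.m₂ : ℤ) - q.m₁) ^ 2| := by
        rw [← abs_mul, factored]
      _ ≤ 2 * (b : ℤ) ^ 2 := by
        rw [abs_le]
        constructor <;> linarith [sq_nonneg ((q.m₂ : ℤ) - q.m₁), sq_nonneg ((q.m₁' : ℤ) - q.m₁),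
          sq_nonneg ((q.m₂' : ℤ) - q.m₁)]
  linarith

end Sextuple

theorem exists_mem_uIcc_sub_eq_mul_sub_of_hasDerivAt {f f' : ℝ → ℝ}
    (hf : ∀ x, HasDerivAt f (f' x) x) (s t : ℝ) :
    ∃ ξ ∈ Set.uIcc s t, f s - f t = f' ξ * (s - t) := by
  wlog hst : s ≤ t generalizing s t
  · obtain ⟨ξ, hξ, h⟩ := this t s (le_of_not_ge hst)
    exact ⟨ξ, Set.uIcc_comm s t ▸ hξ, by linear_combination -h⟩
  obtain rfl | hst := hst.eq_or_lt
  · exact ⟨s, by simp, by simp⟩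
  obtain ⟨ξ, hξ, h⟩ := exists_hasDerivAt_eq_slope f f' hst
    (fun x _ ↦ (hf x).continuousAt.continuousWithinAt) fun x _ ↦ hf x
  refine ⟨ξ, Set.uIcc_of_le hst.le ▸ Set.Ioo_subset_Icc_self hξ, ?_⟩
  rw [h]
  field [sub_ne_zero.mpr hst.ne']

theorem pow_mul_abs_sub_le_abs_pow_succ_sub_pow_succ {x y : ℝ} (hx : 0 ≤ x) (hy : 0 ≤ y) (j : ℕ) :
    y ^ j * |x - y| ≤ |x ^ (j + 1) - y ^ (j + 1)| := by
  rw [← geom_sum₂_mul, abs_mul]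
  gcongr
  calc y ^ j = x ^ 0 * y ^ (j + 1 - 1 - 0) := by simp
    _ ≤ ∑ i ∈ Finset.range (j + 1), x ^ i * y ^ (j + 1 - 1 - i) :=
      Finset.single_le_sum (f := fun i ↦ x ^ i * y ^ (j + 1 - 1 - i)) (fun i _ ↦ by positivity)
        (by simp)
    _ ≤ _ := le_abs_self _

section StationaryPow

/-- The combination of `t ^ (j + 3)` and `t ^ 2` which is stationary at `t = c`. Second order
Taylor expansion around `c` thus replaces the two equations for the exponents `j + 3` and `2`. -/
def stationaryPow (j : ℕ) (c t : ℝ) : ℝ := 2 * t ^ (j + 3) - (j + 3) * c ^ (j + 1) * t ^ 2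

theorem hasDerivAt_stationaryPow (j : ℕ) (c t : ℝ) :
    HasDerivAt (stationaryPow j c) (2 * (j + 3) * t * (t ^ (j + 1) - c ^ (j + 1))) t := by
  have := ((hasDerivAt_pow (j + 3) t).const_mul 2).sub
    ((hasDerivAt_pow 2 t).const_mul ((j + 3) * c ^ (j + 1)))
  exact this.congr_deriv (by push_cast; ring)

variable {j : ℕ} {c t : ℝ}

theorem abs_stationaryPow_sub_le {B b : ℝ} (hc : 0 ≤ c) (hcB : c ≤ B) (ht : 0 ≤ t) (htB : t ≤ B)
    (hb : |t - c| ≤ b) :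
    |stationaryPow j c t - stationaryPow j c c| ≤
      2 * (j + 3) * (j + 1) * B ^ (j + 1) * b ^ 2 := by
  obtain ⟨ξ, hξ, h⟩ :=
    exists_mem_uIcc_sub_eq_mul_sub_of_hasDerivAt (hasDerivAt_stationaryPow j c) t c
  have hξb : |ξ - c| ≤ b := by
    rw [abs_sub_comm]
    exact (Set.abs_sub_right_of_mem_uIcc hξ).trans (abs_sub_comm t c ▸ hb)
  obtain ⟨hξ₀, hξB⟩ : 0 ≤ ξ ∧ ξ ≤ B :=
    ⟨(le_inf ht hc).trans hξ.1, hξ.2.trans (sup_le htB hcB)⟩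
  have hB : 0 ≤ B := hc.trans hcB
  have hb₀ : 0 ≤ b := (abs_nonneg _).trans hb
  have hpow : |ξ ^ (j + 1) - c ^ (j + 1)| ≤ b * (j + 1) * B ^ j := by
    refine (abs_pow_sub_pow_le ξ c (j + 1)).trans ?_
    rw [abs_of_nonneg hξ₀, abs_of_nonneg hc, Nat.add_sub_cancel]
    push_cast
    gcongr
    exact max_le hξB hcB
  calc |stationaryPow j c t - stationaryPow j c c|
      = 2 * (j + 3) * ξ * |ξ ^ (j + 1) - c ^ (j + 1)| * |t - c| := by
        rw [h, abs_mul, abs_mul, abs_of_nonneg (a := 2 * ((j : ℝ) + 3) * ξ) (by positivity)]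
    _ ≤ 2 * (j + 3) * B * (b * (j + 1) * B ^ j) * b := by gcongr
    _ = 2 * (j + 3) * (j + 1) * B ^ (j + 1) * b ^ 2 := by ring

theorem le_abs_stationaryPow_sub {N d s : ℝ} (hN : 0 ≤ N) (hd : 0 ≤ d) (hc : N ≤ c) (hs : N ≤ s)
    (ht : N ≤ t) (hgap : c + d ≤ s ∧ c + d ≤ t ∨ s + d ≤ c ∧ t + d ≤ c) :
    2 * (j + 3) * N ^ (j + 1) * (d * |s - t|) ≤ |stationaryPow j c s - stationaryPow j c t| := by
  obtain ⟨ξ, hξ, h⟩ :=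
    exists_mem_uIcc_sub_eq_mul_sub_of_hasDerivAt (hasDerivAt_stationaryPow j c) s t
  have hNξ : N ≤ ξ := (le_inf hs ht).trans hξ.1
  have hdξ : d ≤ |ξ - c| := by
    rw [le_abs]
    obtain ⟨hs, ht⟩ | ⟨hs, ht⟩ := hgap
    · left; linarith [(le_inf hs ht).trans hξ.1]
    · right; linarith [hξ.2.trans (sup_le (le_sub_right_of_add_le hs) (le_sub_right_of_add_le ht))]
  have hξ₀ : 0 ≤ ξ := hN.trans hNξ
  have hc₀ : 0 ≤ c := hN.trans hc
  have hpow : N ^ j * d ≤ |ξ ^ (j + 1) - c ^ (j + 1)| :=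
    calc N ^ j * d ≤ c ^ j * |ξ - c| := by gcongr
      _ ≤ |ξ ^ (j + 1) - c ^ (j + 1)| :=
        pow_mul_abs_sub_le_abs_pow_succ_sub_pow_succ hξ₀ hc₀ j
  calc 2 * (j + 3) * N ^ (j + 1) * (d * |s - t|)
      = 2 * (j + 3) * N * (N ^ j * d) * |s - t| := by ring
    _ ≤ 2 * (j + 3) * ξ * |ξ ^ (j + 1) - c ^ (j + 1)| * |s - t| := by gcongr
    _ = |stationaryPow j c s - stationaryPow j c t| := by
      rw [h, abs_mul, abs_mul, abs_of_nonneg (a := 2 * ((j : ℝ) + 3) * ξ) (by positivity)]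

end StationaryPow

namespace Sextuple

variable {q : Sextuple} {H b d : ℕ}

theorem stationaryPow_sub_eq {j : ℕ} (hq : q.powerDefect 2 = 0) (c : ℝ) :
    stationaryPow j c q.n - stationaryPow j c q.n' =
      2 * q.powerDefect (j + 3) - (stationaryPow j c q.m₁ + stationaryPow j c q.m₂ -
        stationaryPow j c q.m₁' - stationaryPow j c q.m₂') := by
  have hq' : (q.powerDefect 2 : ℝ) = 0 := by exact_mod_cast hq
  simp only [powerDefect, stationaryPow] at *
  push_cast at *
  linear_combination -(j + 3) * c ^ (j + 1) * hq'

theorem IsTransverse.abs_stationaryPow_sub_le {N : ℕ} (j : ℕ) (h : q.IsTransverse H b d)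
    (hent : ∀ i ∈ q.entries, i ≤ N) (hq : q.powerDefect 2 = 0) :
    |stationaryPow j q.m₁ q.n - stationaryPow j q.m₁ q.n'| ≤
      2 * |(q.powerDefect (j + 3) : ℝ)| + 3 * (2 * (j + 3) * (j + 1) * N ^ (j + 1) * b ^ 2) := by
  have le_N {i : ℕ} (hi : i ∈ q.entries) : (i : ℝ) ≤ N := by exact_mod_cast hent i hi
  have near {i : ℕ} (hi : i ∈ q.entries) (hib : |(i : ℤ) - q.m₁| < b) :
      |stationaryPow j q.m₁ i - stationaryPow j q.m₁ q.m₁| ≤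
        2 * (j + 3) * (j + 1) * N ^ (j + 1) * b ^ 2 :=
    _root_.abs_stationaryPow_sub_le (by positivity) (le_N (by simp [entries])) (by positivity)
      (le_N hi) (by exact_mod_cast hib.le)
  have near_m₂ := abs_le.mp (near (by simp [entries]) h.abs_m₂_sub_lt)
  have near_m₁' := abs_le.mp (near (by simp [entries]) h.abs_m₁'_sub_lt)
  have near_m₂' := abs_le.mp (near (by simp [entries]) h.abs_m₂'_sub_lt)
  have defect := abs_le.mp (le_refl |(q.powerDefect (j + 3) : ℝ)|)
  rw [stationaryPow_sub_eq hq, abs_le]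
  constructor <;> linarith

theorem IsTransverse.mul_abs_sub_le_mul_sq {k N : ℕ} {R : ℝ} (h : q.IsTransverse H b d)
    (hk : 3 ≤ k) (hN : 0 < N) (hR : N ≤ R * b ^ 2)
    (hent : ∀ i ∈ q.entries, i ∈ Finset.Icc N (2 * N)) (hq : q.powerDefect 2 = 0)
    (hqk : |q.powerDefect k| ≤ N ^ (k - 1)) :
    d * |(q.n : ℝ) - q.n'| ≤ (R + 3 * k * 2 ^ k) * b ^ 2 := by
  obtain ⟨j, rfl⟩ := Nat.exists_eq_add_of_le' hk
  have hN₀ : (0 : ℝ) < N := by exact_mod_cast hN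
  have N_le {i : ℕ} (hi : i ∈ q.entries) : (N : ℝ) ≤ i := by
    exact_mod_cast (Finset.mem_Icc.mp (hent i hi)).1
  have lower : 2 * (j + 3) * N ^ (j + 1) * (d * |(q.n : ℝ) - q.n'|) ≤
      |stationaryPow j q.m₁ q.n - stationaryPow j q.m₁ q.n'| :=
    le_abs_stationaryPow_sub hN₀.le (by positivity) (N_le (by simp [entries]))
      (N_le (by simp [entries])) (N_le (by simp [entries])) (by exact_mod_cast h.gap)
  have upper := h.abs_stationaryPow_sub_le j (fun i hi ↦ (Finset.mem_Icc.mp (hent i hi)).2) hq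
  have defect : |(q.powerDefect (j + 3) : ℝ)| ≤ N ^ (j + 2) := by exact_mod_cast hqk
  have scaled : 2 * (j + 3) * N ^ (j + 1) * (d * |(q.n : ℝ) - q.n'|) ≤
      2 * (j + 3) * N ^ (j + 1) * (N / (j + 3) + 3 * (j + 1) * 2 ^ (j + 1) * b ^ 2) := by
    calc 2 * (j + 3) * N ^ (j + 1) * (d * |(q.n : ℝ) - q.n'|)
        ≤ 2 * N ^ (j + 2) + 3 * (2 * (j + 3) * (j + 1) * (2 * N : ℕ) ^ (j + 1) * b ^ 2) := by
          linarith
      _ = 2 * (j + 3) * N ^ (j + 1) * (N / (j + 3) + 3 * (j + 1) * 2 ^ (j + 1) * b ^ 2) := by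
          push_cast
          rw [mul_pow]
          field
  calc d * |(q.n : ℝ) - q.n'|
      ≤ N / (j + 3) + 3 * (j + 1) * 2 ^ (j + 1) * b ^ 2 :=
        le_of_mul_le_mul_left scaled (by positivity)
    _ ≤ R * b ^ 2 + 3 * (j + 3) * 2 ^ (j + 3) * b ^ 2 := by
      gcongr ?_ + 3 * (_ + ?_) * ?_ * _
      · exact (div_le_self hN₀.le (by linarith [j.cast_nonneg (α := ℝ)])).trans hR
      · norm_num
      · gcongr <;> norm_num
    _ = (R + 3 * (j + 3 : ℕ) * 2 ^ (j + 3)) * b ^ 2 := by push_cast; ring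

end Sextuple

section AdditiveCharacter

theorem ee_add (s t : ℝ) : ee (s + t) = ee s * ee t := by
  simp only [ee, Complex.ofReal_add, mul_add, Complex.exp_add]

theorem ee_eq_exp_mul_I (t : ℝ) : ee t = Complex.exp ((2 * π * t : ℝ) * Complex.I) := by
  rw [ee]
  congr 1
  push_cast
  ring

theorem conj_ee (t : ℝ) : conj (ee t) = ee (-t) := by
  simp only [ee_eq_exp_mul_I, ← Complex.exp_conj, map_mul, Complex.conj_ofReal, Complex.conj_I]
  congr 1
  push_cast
  ring

theorem norm_ee (t : ℝ) : ‖ee t‖ = 1 := by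
  rw [ee_eq_exp_mul_I, Complex.norm_exp_ofReal_mul_I]

theorem re_ee (t : ℝ) : (ee t).re = cos (2 * π * t) := by
  rw [ee_eq_exp_mul_I, Complex.exp_ofReal_mul_I_re]

theorem ee_zero : ee 0 = 1 := by simp [ee]

theorem ee_intCast (n : ℤ) : ee n = 1 :=
  Complex.exp_eq_one_iff.mpr ⟨n, by push_cast; ring⟩

@[fun_prop]
theorem continuous_ee : Continuous ee := by
  unfold ee
  fun_prop

theorem setIntegral_Icc_ee_mul_intCast_eq_zero {n : ℤ} (hn : n ≠ 0) {a b : ℤ} (hab : a ≤ b) :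
    ∫ x in Set.Icc (a : ℝ) b, ee (x * n) = 0 := by
  have hc : 2 * (π : ℂ) * Complex.I * n ≠ 0 := by
    simp [hn, pi_ne_zero]
  have ee_mul (x : ℝ) : ee (x * n) = Complex.exp (2 * (π : ℂ) * Complex.I * n * x) := by
    rw [ee]
    congr 1
    push_cast
    ring
  have ee_endpoint (c : ℤ) : ee (c * n) = 1 := by exact_mod_cast ee_intCast (c * n)
  rw [integral_Icc_eq_integral_Ioc, ← intervalIntegral.integral_of_le (by exact_mod_cast hab)]
  simp_rw [ee_mul]
  rw [integral_exp_mul_complex hc, ← ee_mul, ← ee_mul, ee_endpoint, ee_endpoint, sub_self, zero_div]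

theorem setIntegral_Icc_zero_one_ee_mul_intCast (n : ℤ) :
    ∫ y in Set.Icc (0 : ℝ) 1, ee (y * n) = if n = 0 then 1 else 0 := by
  split_ifs with hn
  · simp [hn, ee_zero]
  · simpa using setIntegral_Icc_ee_mul_intCast_eq_zero hn zero_le_one

end AdditiveCharacter

section FejerWeight

/-- The Fejér kernel with period one, normalised by `fejerWeight L 0 = 1`. -/
def fejerWeight (L : ℕ) (y : ℝ) : ℝ := ‖∑ l ∈ Finset.range L, ee (y * l)‖ ^ 2 / L ^ 2

variable {L : ℕ}

theorem fejerWeight_nonneg (L : ℕ) (y : ℝ) : 0 ≤ fejerWeight L y := by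
  unfold fejerWeight
  positivity

@[fun_prop]
theorem continuous_fejerWeight (L : ℕ) : Continuous (fejerWeight L) := by
  unfold fejerWeight
  fun_prop

theorem one_fourth_le_fejerWeight (hL : 0 < L) {y : ℝ} (hy : 0 ≤ y) (hyL : y ≤ 1 / (8 * L)) :
    1 / 4 ≤ fejerWeight L y := by
  have half_le_re (l : ℕ) (hl : l ∈ Finset.range L) : 1 / 2 ≤ (ee (y * l)).re := by
    have hyl : y * l ≤ 1 / 8 := by
      calc y * l ≤ 1 / (8 * L) * L := by
            gcongr
            exact (Finset.mem_range.mp hl).le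
        _ = 1 / 8 := by field
    rw [re_ee, ← cos_pi_div_three]
    exact cos_le_cos_of_nonneg_of_le_pi (by positivity) (by linarith [pi_pos])
      (by nlinarith [pi_pos])
  have half_le_norm : (L : ℝ) / 2 ≤ ‖∑ l ∈ Finset.range L, ee (y * l)‖ := by
    calc (L : ℝ) / 2 = ∑ _l ∈ Finset.range L, 1 / 2 := by simp; ring
      _ ≤ ∑ l ∈ Finset.range L, (ee (y * l)).re := Finset.sum_le_sum half_le_re
      _ ≤ ‖∑ l ∈ Finset.range L, ee (y * l)‖ := by
        rw [← Complex.re_sum]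
        exact Complex.re_le_norm _
  calc (1 / 4 : ℝ) = (L / 2) ^ 2 / L ^ 2 := by field
    _ ≤ fejerWeight L y := by unfold fejerWeight; gcongr

theorem ofReal_fejerWeight (L : ℕ) (y : ℝ) : (fejerWeight L y : ℂ) =
    (∑ p ∈ Finset.range L ×ˢ Finset.range L, ee (y * (p.1 - p.2 : ℤ))) / L ^ 2 := by
  simp only [fejerWeight, Complex.ofReal_div, Complex.ofReal_pow, Complex.ofReal_natCast,
    ← Complex.mul_conj', map_sum, Finset.sum_mul_sum, ← Finset.sum_product', conj_ee, ← ee_add]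
  refine congr_arg (· / _) (Finset.sum_congr rfl fun p _ ↦ ?_)
  congr 1
  push_cast
  ring

theorem setIntegral_fejerWeight_mul_ee (L : ℕ) (B : ℤ) :
    ∫ y in Set.Icc (0 : ℝ) 1, (fejerWeight L y : ℂ) * ee (y * B) =
      (∑ p ∈ Finset.range L ×ˢ Finset.range L, if (p.1 : ℤ) - p.2 + B = 0 then 1 else 0) /
        L ^ 2 := by
  have integrable_ee (c : ℝ) : IntegrableOn (fun y ↦ ee (y * c)) (Set.Icc 0 1) :=
    (by fun_prop : Continuous fun y ↦ ee (y * c)).continuousOn.integrableOn_compact isCompact_Icc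
  have expand (y : ℝ) : (fejerWeight L y : ℂ) * ee (y * B) =
      (∑ p ∈ Finset.range L ×ˢ Finset.range L, ee (y * (p.1 - p.2 + B : ℤ))) / L ^ 2 := by
    rw [ofReal_fejerWeight, div_mul_eq_mul_div, Finset.sum_mul]
    simp only [← ee_add, ← mul_add, Int.cast_add]
  simp_rw [expand]
  rw [integral_div, integral_finsetSum _ fun p _ ↦ integrable_ee _]
  simp_rw [setIntegral_Icc_zero_one_ee_mul_intCast]

theorem setIntegral_fejerWeight_mul_ee_eq_zero {B : ℤ} (hB : L ≤ |B|) :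
    ∫ y in Set.Icc (0 : ℝ) 1, (fejerWeight L y : ℂ) * ee (y * B) = 0 := by
  rw [setIntegral_fejerWeight_mul_ee, Finset.sum_eq_zero, zero_div]
  intro p hp
  rw [Finset.mem_product, Finset.mem_range, Finset.mem_range] at hp
  rw [if_neg]
  rw [le_abs] at hB
  omega

theorem setIntegral_fejerWeight (hL : L ≠ 0) :
    ∫ y in Set.Icc (0 : ℝ) 1, fejerWeight L y = 1 / L := by
  have h := setIntegral_fejerWeight_mul_ee L 0
  have diag (l l' : ℕ) : (l : ℤ) - l' = 0 ↔ l = l' := by omega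
  simp only [Int.cast_zero, mul_zero, ee_zero, mul_one, integral_complex_ofReal, add_zero, diag,
    Finset.sum_product, Finset.sum_ite_eq, Finset.sum_ite_mem, Finset.inter_self, Finset.sum_const,
    Finset.card_range, nsmul_eq_mul] at h
  have hL₀ : (L : ℂ) ≠ 0 := by exact_mod_cast hL
  apply Complex.ofReal_injective
  rw [h]
  push_cast
  field

/-- The measure on `[0, 1]` with density the Fejér kernel. -/
def fejerMeasure (L : ℕ) : Measure ℝ :=
  (volume.restrict (Set.Icc 0 1)).withDensity fun y ↦ ENNReal.ofReal (fejerWeight L y)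

theorem integral_fejerMeasure {E : Type*} [NormedAddCommGroup E] [NormedSpace ℝ E] (L : ℕ)
    (g : ℝ → E) : ∫ y, g y ∂fejerMeasure L = ∫ y in Set.Icc (0 : ℝ) 1, fejerWeight L y • g y := by
  rw [fejerMeasure, integral_withDensity_eq_integral_toReal_smul
    (continuous_fejerWeight L).measurable.ennreal_ofReal (by simp)]
  simp only [ENNReal.toReal_ofReal (fejerWeight_nonneg L _)]

instance isFiniteMeasure_fejerMeasure (L : ℕ) : IsFiniteMeasure (fejerMeasure L) :=
  isFiniteMeasure_withDensity_ofReal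
    ((continuous_fejerWeight L).continuousOn.integrableOn_compact isCompact_Icc).2

theorem measureReal_fejerMeasure_univ (hL : L ≠ 0) : (fejerMeasure L).real Set.univ = 1 / L := by
  have h := integral_fejerMeasure L fun _ ↦ (1 : ℝ)
  simpa [setIntegral_fejerWeight hL] using h

theorem restrict_Icc_le_four_smul_fejerMeasure (hL : 0 < L) :
    volume.restrict (Set.Icc (0 : ℝ) (1 / (8 * L))) ≤ (4 : ENNReal) • fejerMeasure L := by
  have hL₁ : (1 : ℝ) ≤ L := by exact_mod_cast hL
  have subset : Set.Icc (0 : ℝ) (1 / (8 * L)) ⊆ Set.Icc 0 1 := by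
    refine Set.Icc_subset_Icc_right ?_
    rw [div_le_one (by positivity)]
    linarith
  rw [← Set.inter_eq_left.mpr subset, ← Measure.restrict_restrict measurableSet_Icc,
    ← withDensity_indicator_one measurableSet_Icc, fejerMeasure,
    ← withDensity_smul _ (continuous_fejerWeight L).measurable.ennreal_ofReal]
  refine withDensity_mono (.of_forall fun y ↦ Set.indicator_le' (fun y hy ↦ ?_) (by simp) y)
  calc (1 : ENNReal) = ENNReal.ofReal (4 * (1 / 4)) := by norm_num
    _ ≤ ENNReal.ofReal (4 * fejerWeight L y) := by
      gcongr
      exact one_fourth_le_fejerWeight hL hy.1 hy.2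
    _ = ((4 : ENNReal) • fun y ↦ ENNReal.ofReal (fejerWeight L y)) y := by
      rw [ENNReal.ofReal_mul zero_le_four]
      norm_num

/-- The product of Lebesgue measure on `[-1, 1]` with the Fejér measure. -/
def fejerBoxMeasure (L : ℕ) : Measure (ℝ × ℝ) :=
  (volume.restrict (Set.Icc (-1) 1)).prod (fejerMeasure L)

instance isFiniteMeasure_fejerBoxMeasure (L : ℕ) : IsFiniteMeasure (fejerBoxMeasure L) := by
  unfold fejerBoxMeasure
  infer_instance

theorem measureReal_fejerBoxMeasure_univ (hL : L ≠ 0) :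
    (fejerBoxMeasure L).real Set.univ = 2 / L := by
  rw [fejerBoxMeasure, ← Set.univ_prod_univ, measureReal_prod_prod,
    measureReal_fejerMeasure_univ hL]
  norm_num
  ring

theorem integral_fejerBoxMeasure_ee_eq_zero {A B : ℤ} (h : A ≠ 0 ∨ L ≤ |B|) :
    ∫ z : ℝ × ℝ, ee (z.1 * A + z.2 * B) ∂fejerBoxMeasure L = 0 := by
  simp_rw [ee_add]
  rw [fejerBoxMeasure, integral_prod_mul (fun x : ℝ ↦ ee (x * A)) fun y : ℝ ↦ ee (y * B),
    mul_eq_zero]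
  refine h.imp (fun hA ↦ ?_) fun hB ↦ ?_
  · exact_mod_cast setIntegral_Icc_ee_mul_intCast_eq_zero hA (a := -1) (b := 1) (by norm_num)
  · simpa only [integral_fejerMeasure, Complex.real_smul] using
      setIntegral_fejerWeight_mul_ee_eq_zero hB

theorem setIntegral_box_le_four_mul_integral_fejerBoxMeasure (hL : 0 < L) {g : ℝ × ℝ → ℝ}
    (hg : Integrable g (fejerBoxMeasure L)) (hg₀ : ∀ z, 0 ≤ g z) :
    ∫ z in Set.Icc (-1 : ℝ) 1 ×ˢ Set.Icc (0 : ℝ) (1 / (8 * L)), g z ≤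
      4 * ∫ z, g z ∂fejerBoxMeasure L := by
  have hle : volume.restrict (Set.Icc (-1 : ℝ) 1 ×ˢ Set.Icc (0 : ℝ) (1 / (8 * L))) ≤
      (4 : ENNReal) • fejerBoxMeasure L := by
    rw [Measure.volume_eq_prod, ← Measure.prod_restrict, fejerBoxMeasure, ← Measure.prod_smul_right]
    exact Measure.prod_mono le_rfl (restrict_Icc_le_four_smul_fejerMeasure hL)
  calc ∫ z in Set.Icc (-1 : ℝ) 1 ×ˢ Set.Icc (0 : ℝ) (1 / (8 * L)), g z
      ≤ ∫ z, g z ∂(4 : ENNReal) • fejerBoxMeasure L :=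
        integral_mono_measure hle (.of_forall hg₀) (hg.smul_measure (by norm_num))
    _ = 4 * ∫ z, g z ∂fejerBoxMeasure L := by
      rw [integral_smul_measure]
      norm_num

end FejerWeight

section Tiling

theorem setIntegral_Icc_le_mul_of_forall_translate {g : ℝ → ℝ} (hg : Continuous g)
    (hg₀ : ∀ y, 0 ≤ g y) {h V lam : ℝ} (hh : 0 < h) (hlam : 0 ≤ lam)
    (hV : ∀ y₀, ∫ y in Set.Icc 0 h, g (y₀ + y) ≤ V) :
    ∫ y in Set.Icc 0 lam, g y ≤ (lam / h + 1) * V := by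
  set J := ⌈lam / h⌉₊
  have hJ : lam ≤ J * h := (div_le_iff₀ hh).mp (Nat.le_ceil _)
  have tile (j : ℕ) : ∫ y in (j * h : ℝ)..((j + 1 : ℕ) * h : ℝ), g y ≤ V := by
    have := hV (j * h)
    rw [integral_Icc_eq_integral_Ioc, ← intervalIntegral.integral_of_le hh.le,
      intervalIntegral.integral_comp_add_left, add_zero] at this
    rwa [Nat.cast_succ, add_one_mul]
  have hV₀ : 0 ≤ V := (integral_nonneg fun y ↦ hg₀ _).trans (hV 0)
  calc ∫ y in Set.Icc 0 lam, g y
      ≤ ∫ y in Set.Icc 0 (J * h), g y :=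
        setIntegral_mono_set (hg.continuousOn.integrableOn_compact isCompact_Icc)
          (.of_forall hg₀) (.of_forall (Set.Icc_subset_Icc_right hJ))
    _ = ∑ j ∈ Finset.range J, ∫ y in (j * h : ℝ)..((j + 1 : ℕ) * h : ℝ), g y := by
      rw [intervalIntegral.sum_integral_adjacent_intervals (a := fun j : ℕ ↦ (j * h : ℝ))
        fun j _ ↦ hg.intervalIntegrable _ _, Nat.cast_zero, zero_mul,
        intervalIntegral.integral_of_le (by positivity), integral_Icc_eq_integral_Ioc]
    _ ≤ J * V := by
      simpa using Finset.sum_le_card_nsmul (Finset.range J) _ V fun j _ ↦ tile j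
    _ ≤ (lam / h + 1) * V := by
      gcongr
      exact (Nat.ceil_lt_add_one (by positivity)).le

theorem integral_integral_Icc_le_mul_of_forall_translate {g : ℝ × ℝ → ℝ} (hg : Continuous g)
    (hg₀ : ∀ z, 0 ≤ g z) {c d h V lam : ℝ} (hh : 0 < h) (hlam : 0 ≤ lam)
    (hV : ∀ y₀, ∫ z in Set.Icc c d ×ˢ Set.Icc 0 h, g (z.1, y₀ + z.2) ≤ V) :
    ∫ x in Set.Icc c d, ∫ y in Set.Icc 0 lam, g (x, y) ≤ (lam / h + 1) * V := by
  have integrable {F : ℝ × ℝ → ℝ} (hF : Continuous F) (b : ℝ) :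
      Integrable F ((volume.restrict (Set.Icc c d)).prod (volume.restrict (Set.Icc 0 b))) := by
    rw [Measure.prod_restrict]
    exact hF.continuousOn.integrableOn_compact (isCompact_Icc.prod isCompact_Icc)
  rw [integral_integral_swap (f := fun x y ↦ g (x, y)) (integrable hg lam)]
  refine setIntegral_Icc_le_mul_of_forall_translate
    (continuous_parametric_integral_of_continuous (by fun_prop) isCompact_Icc)
    (fun y ↦ integral_nonneg fun x ↦ hg₀ _) hh hlam fun y₀ ↦ ?_
  have := hV y₀
  rwa [Measure.volume_eq_prod, ← Measure.prod_restrict,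
    integral_prod_symm _ (integrable (by fun_prop) h)] at this

end Tiling

section WeylSum

/-- The terms of the mixed Weyl sum with coefficients `a`, as functions of `z = (x, y)`. -/
def weylTerm (a : ℕ → ℂ) (k n : ℕ) (z : ℝ × ℝ) : ℂ :=
  a n * ee (z.1 * (n : ℝ) ^ 2 + z.2 * (n : ℝ) ^ k)

/-- The mixed Weyl sum over the dyadic range `N ≤ n ≤ 2 * N`. -/
def weylSum (a : ℕ → ℂ) (k N : ℕ) (z : ℝ × ℝ) : ℂ :=
  ∑ n ∈ Finset.Icc N (2 * N), weylTerm a k n z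

variable {a : ℕ → ℂ} {k L N : ℕ}

@[fun_prop]
theorem continuous_weylTerm (a : ℕ → ℂ) (k n : ℕ) : Continuous (weylTerm a k n) := by
  unfold weylTerm
  fun_prop

theorem norm_weylTerm (a : ℕ → ℂ) (k n : ℕ) (z : ℝ × ℝ) : ‖weylTerm a k n z‖ = ‖a n‖ := by
  rw [weylTerm, norm_mul, norm_ee, mul_one]

theorem memLp_weylTerm {μ : Measure (ℝ × ℝ)} [IsFiniteMeasure μ] (p : ENNReal) (a : ℕ → ℂ)
    (k n : ℕ) : MemLp (weylTerm a k n) p μ :=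
  .of_bound (continuous_weylTerm a k n).aestronglyMeasurable ‖a n‖
    (.of_forall fun z ↦ (norm_weylTerm a k n z).le)

@[fun_prop]
theorem continuous_weylSum (a : ℕ → ℂ) (k N : ℕ) : Continuous (weylSum a k N) := by
  unfold weylSum
  fun_prop

theorem weylSum_congr {a' : ℕ → ℂ} (h : ∀ n ∈ Finset.Icc N (2 * N), a n = a' n) :
    weylSum a k N = weylSum a' k N := by
  ext z
  exact Finset.sum_congr rfl fun n hn ↦ by rw [weylTerm, weylTerm, h n hn]

theorem weylSum_add_right (a : ℕ → ℂ) (k N : ℕ) (y₀ : ℝ) (z : ℝ × ℝ) :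
    weylSum a k N (z.1, y₀ + z.2) = weylSum (fun n ↦ a n * ee (y₀ * (n : ℝ) ^ k)) k N z := by
  refine Finset.sum_congr rfl fun n _ ↦ ?_
  rw [weylTerm, weylTerm, mul_assoc, ← ee_add]
  ring_nf

theorem blockSum_weylTerm (ha : ∀ n, a n ≠ 0 → n ∈ Finset.Icc N (2 * N)) {H : ℕ} (hH : N < H)
    (z : ℝ × ℝ) : blockSum (weylTerm a k) N H z = weylSum a k N z := by
  refine (Finset.sum_subset (fun n hn ↦ ?_) fun n _ hn ↦ ?_).symm
  · rw [Finset.mem_Icc] at hn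
    rw [Finset.mem_Ico]
    omega
  · rw [weylTerm, not_not.mp (mt (ha n) hn), zero_mul]

theorem of_correlation_weylTerm_ne_zero {q : Sextuple}
    (h : q.correlation (fejerBoxMeasure L) (weylTerm a k) ≠ 0) :
    (∀ i ∈ q.entries, a i ≠ 0) ∧ q.powerDefect 2 = 0 ∧ |q.powerDefect k| < L := by
  have expand (z : ℝ × ℝ) : weylTerm a k q.n z * weylTerm a k q.m₁ z * weylTerm a k q.m₂ z *
      conj (weylTerm a k q.n' z * weylTerm a k q.m₁' z * weylTerm a k q.m₂' z) =
      a q.n * a q.m₁ * a q.m₂ * conj (a q.n' * a q.m₁' * a q.m₂') *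
        ee (z.1 * q.powerDefect 2 + z.2 * q.powerDefect k) := by
    have phase : z.1 * q.powerDefect 2 + z.2 * q.powerDefect k =
        (z.1 * (q.n : ℝ) ^ 2 + z.2 * (q.n : ℝ) ^ k) +
          (z.1 * (q.m₁ : ℝ) ^ 2 + z.2 * (q.m₁ : ℝ) ^ k) +
          (z.1 * (q.m₂ : ℝ) ^ 2 + z.2 * (q.m₂ : ℝ) ^ k) +
          -(z.1 * (q.n' : ℝ) ^ 2 + z.2 * (q.n' : ℝ) ^ k) +
          -(z.1 * (q.m₁' : ℝ) ^ 2 + z.2 * (q.m₁' : ℝ) ^ k) +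
          -(z.1 * (q.m₂' : ℝ) ^ 2 + z.2 * (q.m₂' : ℝ) ^ k) := by
      unfold Sextuple.powerDefect
      push_cast
      ring
    rw [phase, ee_add, ee_add, ee_add, ee_add, ee_add]
    simp only [weylTerm, map_mul, conj_ee]
    ring
  simp_rw [Sextuple.correlation, expand, integral_const_mul] at h
  refine ⟨?_, ?_⟩
  · have := left_ne_zero_of_mul h
    simpa [Sextuple.entries, and_assoc] using this
  · contrapose! h
    rw [integral_fejerBoxMeasure_ee_eq_zero (or_iff_not_imp_left.mpr fun h₂ ↦ h (not_not.mp h₂)),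
      mul_zero]

theorem transverseOrthogonality_weylTerm_of_sq_lt {M H : ℕ} (ha : ∀ n, a n ≠ 0 → N ≤ n)
    (hH : 3 * ((H : ℤ) - 1) ^ 2 < 2 * N) :
    TransverseOrthogonality (fejerBoxMeasure L) (weylTerm a k) M H 1 := by
  intro q b d _ hbH hq
  contrapose!
  intro hcorr
  obtain ⟨hent, hq₂, -⟩ := of_correlation_weylTerm_ne_zero hcorr
  have hm₁ : (N : ℤ) ≤ q.m₁ := by exact_mod_cast ha _ (hent q.m₁ (by simp [Sextuple.entries]))
  have hq₁ := hq.powerDefect_one_eq_zero hbH (by linarith) hq₂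
  rw [one_mul]
  exact_mod_cast hq.mul_abs_sub_le_sq hq₁ hq₂

theorem transverseOrthogonality_weylTerm {M H : ℕ} {R : ℝ} (hk : 3 ≤ k) (hN : 0 < N)
    (ha : ∀ n, a n ≠ 0 → n ∈ Finset.Icc N (2 * N)) (hR : 0 ≤ R) (hM : N ≤ R * M ^ 2) :
    TransverseOrthogonality (fejerBoxMeasure (N ^ (k - 1))) (weylTerm a k) M H
      (R + 3 * k * 2 ^ k) := by
  intro q b d hMb _ hq
  contrapose!
  intro hcorr
  obtain ⟨hent, hq₂, hqk⟩ := of_correlation_weylTerm_ne_zero hcorr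
  exact hq.mul_abs_sub_le_mul_sq hk hN (hM.trans (by gcongr)) (fun i hi ↦ ha i (hent i hi)) hq₂
    (by exact_mod_cast hqk.le)

theorem sixthMoment_one_le {X : Type*} [MeasurableSpace X] {μ : Measure X} [IsFiniteMeasure μ]
    {f : ℕ → X → ℂ} {c : ℕ} (hf : ∀ x, ‖f c x‖ ≤ 1) : sixthMoment μ f c 1 ≤ μ.real Set.univ := by
  have norm_le (x : X) : ‖blockSum f c 1 x‖ ^ 6 ≤ 1 :=
    pow_le_one₀ (norm_nonneg _) (by simpa [blockSum] using hf x)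
  calc sixthMoment μ f c 1 ≤ ∫ _, (1 : ℝ) ∂μ :=
        integral_mono_of_nonneg (.of_forall fun x ↦ by positivity) (integrable_const 1)
          (.of_forall norm_le)
    _ = μ.real Set.univ := by simp

theorem sixthMoment_weylTerm_pow_le {P : ℕ} {η : ℝ} (ha : ∀ n, a n ≠ 0 → N ≤ n)
    (ha₁ : ∀ n, ‖a n‖ ≤ 1) (hL : L ≠ 0) (hP : 3 * ((160 ^ P : ℕ) - 1 : ℤ) ^ 2 < 2 * N)
    (hη : 0 < η) (c : ℕ) :
    sixthMoment (fejerBoxMeasure L) (weylTerm a k) c (160 ^ P) ≤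
      160 ^ (3 * 2 ^ ⌈26 / η⌉₊) * (2 / L) * (160 ^ P : ℝ) ^ (3 + η) := by
  have := (transverseOrthogonality_weylTerm_of_sq_lt (M := 1) (L := L) (k := k) ha
    hP).sixthMoment_le_mul_rpow (r := 160) (p := P) (memLp_weylTerm 6 a k) one_pos (by norm_num)
    le_rfl (fun c ↦ (sixthMoment_one_le fun z ↦ (norm_weylTerm a k c z).trans_le (ha₁ c)).trans_eq
      (measureReal_fejerBoxMeasure_univ hL)) hη (one_mul _).le c
  simpa using this

theorem exists_pow_sq_comparable {r : ℕ} (hr : 1 < r) (hN : 0 < N) :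
    ∃ P, N ≤ r ^ 4 * (r ^ P) ^ 2 ∧ r ^ P ≤ N ∧ 3 * ((r ^ P : ℕ) - 1 : ℤ) ^ 2 < 2 * N := by
  have lower := Nat.pow_log_le_self (r ^ 2) hN.ne'
  have upper := Nat.lt_pow_succ_log_self (Nat.one_lt_pow two_ne_zero hr) N
  rcases hlog : Nat.log (r ^ 2) N with _ | P <;> rw [hlog] at lower upper
  · refine ⟨0, ?_, by simpa using hN.nat_succ_le, by simpa using hN⟩
    calc N ≤ r ^ 2 := by simpa using upper.le
      _ ≤ r ^ 4 * (r ^ 0) ^ 2 := by simpa using Nat.pow_le_pow_right hr.le (by norm_num)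
  · have hM : 0 < r ^ P := by positivity
    have four_mul_sq_le : 4 * (r ^ P) ^ 2 ≤ N :=
      calc 4 * (r ^ P) ^ 2 ≤ r ^ 2 * (r ^ P) ^ 2 := by gcongr; nlinarith
        _ = (r ^ 2) ^ (P + 1) := by ring
        _ ≤ N := lower
    refine ⟨P, upper.le.trans_eq (by rw [Nat.succ_eq_add_one]; ring), by nlinarith, ?_⟩
    zify at hM four_mul_sq_le
    push_cast
    nlinarith

theorem exists_lt_mul_pow_le {M r : ℕ} (hr : 1 < r) (hM : 0 < M) (hMN : M ≤ N) :
    ∃ p, N < M * r ^ p ∧ M * r ^ p ≤ r * N := by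
  have hNM : N / M ≠ 0 := (Nat.div_pos hMN hM).ne'
  refine ⟨Nat.log r (N / M) + 1, ?_, ?_⟩
  · rw [mul_comm, ← Nat.div_lt_iff_lt_mul hM]
    exact Nat.lt_pow_succ_log_self hr _
  · calc M * r ^ (Nat.log r (N / M) + 1) = r * (r ^ Nat.log r (N / M) * M) := by ring
      _ ≤ r * N := by
        gcongr
        exact (Nat.le_div_iff_mul_le hM).mp (Nat.pow_log_le_self r hNM)

theorem sixthMoment_weylTerm_mul_pow_le {P r p : ℕ} {η : ℝ} (hk : 3 ≤ k) (hN : 0 < N)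
    (ha : ∀ n, a n ≠ 0 → n ∈ Finset.Icc N (2 * N)) (ha₁ : ∀ n, ‖a n‖ ≤ 1)
    (hPN : N ≤ 160 ^ 4 * (160 ^ P) ^ 2) (hP : 3 * ((160 ^ P : ℕ) - 1 : ℤ) ^ 2 < 2 * N)
    (hr : 160 ^ 4 + 3 * k * 2 ^ k ≤ r) (hη : 0 < η) (c : ℕ) :
    sixthMoment (fejerBoxMeasure (N ^ (k - 1))) (weylTerm a k) c (160 ^ P * r ^ p) ≤
      r ^ (3 * 2 ^ ⌈26 / η⌉₊) *
        (160 ^ (3 * 2 ^ ⌈26 / η⌉₊) * (2 / N ^ (k - 1)) * (160 ^ P : ℝ) ^ (3 + η)) *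
        (r ^ p : ℝ) ^ (3 + η) := by
  refine (transverseOrthogonality_weylTerm (M := 160 ^ P) (R := 160 ^ 4) hk hN ha (by norm_num)
    (by exact_mod_cast hPN)).sixthMoment_le_mul_rpow (memLp_weylTerm 6 a k) (by positivity)
    (by exact_mod_cast hr) (by omega) (fun c ↦ ?_) hη le_rfl c
  simpa using sixthMoment_weylTerm_pow_le (k := k) (L := N ^ (k - 1))
    (fun n hn ↦ (Finset.mem_Icc.mp (ha n hn)).1) ha₁ (by positivity) hP hη c

theorem exists_integral_norm_weylSum_pow_le {η : ℝ} (hk : 3 ≤ k) (hη : 0 < η) :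
    ∃ K > (0 : ℝ), ∀ N > 0, ∀ a : ℕ → ℂ, (∀ n ∈ Finset.Icc N (2 * N), ‖a n‖ ≤ 1) →
      ∫ z, ‖weylSum a k N z‖ ^ 6 ∂fejerBoxMeasure (N ^ (k - 1)) ≤
        K * (N : ℝ) ^ (3 + η) / N ^ (k - 1) := by
  set r := 160 ^ 4 + 3 * k * 2 ^ k
  set E := 3 * 2 ^ ⌈26 / η⌉₊
  refine ⟨2 * 160 ^ E * r ^ E * (r : ℝ) ^ (3 + η), by positivity, fun N hN a ha ↦ ?_⟩
  set a' := Set.indicator (Set.Icc N (2 * N)) a with ha'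
  have support (n) (hn : a' n ≠ 0) : n ∈ Finset.Icc N (2 * N) := by
    simpa using Set.mem_of_indicator_ne_zero hn
  have norm_le (n) : ‖a' n‖ ≤ 1 := by
    by_cases hn : n ∈ Set.Icc N (2 * N)
    · simpa [ha', hn] using ha n (by simpa using hn)
    · simp [ha', hn]
  have weylSum_eq : weylSum a k N = weylSum a' k N :=
    weylSum_congr fun n hn ↦ (Set.indicator_of_mem (by simpa using hn) a).symm
  obtain ⟨P, hPN, hP_le, hP⟩ := exists_pow_sq_comparable (r := 160) (by norm_num) hN
  obtain ⟨p, hp, hp_le⟩ := exists_lt_mul_pow_le (r := r) (by omega) (by positivity) hP_le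
  calc ∫ z, ‖weylSum a k N z‖ ^ 6 ∂fejerBoxMeasure (N ^ (k - 1))
      = sixthMoment (fejerBoxMeasure (N ^ (k - 1))) (weylTerm a' k) N (160 ^ P * r ^ p) := by
        simp_rw [sixthMoment, weylSum_eq, blockSum_weylTerm support hp]
    _ ≤ r ^ E * (160 ^ E * (2 / N ^ (k - 1)) * (160 ^ P : ℝ) ^ (3 + η)) * (r ^ p : ℝ) ^ (3 + η) :=
        sixthMoment_weylTerm_mul_pow_le hk hN support norm_le hPN hP le_rfl hη N
    _ = 2 * 160 ^ E * r ^ E * (160 ^ P * r ^ p : ℝ) ^ (3 + η) / N ^ (k - 1) := by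
        rw [mul_rpow (by positivity) (by positivity)]
        ring
    _ ≤ 2 * 160 ^ E * r ^ E * (r * N : ℝ) ^ (3 + η) / N ^ (k - 1) := by
        gcongr ?_ * ?_ ^ _ / _
        exact_mod_cast hp_le
    _ = 2 * 160 ^ E * r ^ E * (r : ℝ) ^ (3 + η) * (N : ℝ) ^ (3 + η) / N ^ (k - 1) := by
        rw [mul_rpow (by positivity) (by positivity), ← mul_assoc]

theorem setIntegral_norm_weylSum_pow_le {B : ℝ} (hL : 0 < L)
    (hB : ∫ z, ‖weylSum a k N z‖ ^ 6 ∂fejerBoxMeasure L ≤ B) :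
    ∫ z in Set.Icc (-1 : ℝ) 1 ×ˢ Set.Icc (0 : ℝ) (1 / (8 * L)), ‖weylSum a k N z‖ ^ 6 ≤ 4 * B :=
  have memLp : MemLp (weylSum a k N) 6 (fejerBoxMeasure L) :=
    memLp_finsetSum _ fun n _ ↦ memLp_weylTerm 6 a k n
  (setIntegral_box_le_four_mul_integral_fejerBoxMeasure hL
    (by simpa using memLp.integrable_norm_pow (by norm_num)) fun z ↦ by positivity).trans
    (by gcongr)

end WeylSum

theorem sixth_moment_mixed_weyl_sum_general (k : ℕ) (hk : 3 ≤ k) :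
    ∀ ε > (0 : ℝ), ∃ C > (0 : ℝ), ∀ N : ℕ, 1 ≤ N → ∀ a : ℕ → ℂ,
      (∀ n ∈ Finset.Icc N (2 * N), ‖a n‖ ≤ 1) → ∀ lam : ℝ, 0 ≤ lam →
      (∫ x in Set.Icc (-1 : ℝ) 1, ∫ y in Set.Icc (0 : ℝ) lam,
          ‖∑ n ∈ Finset.Icc N (2 * N), a n * ee (x * (n : ℝ) ^ 2 + y * (n : ℝ) ^ k)‖ ^ (6 : ℕ)) ≤
        C * (lam * (N : ℝ) ^ ((3 : ℝ) + ε) + (N : ℝ) ^ ((4 : ℝ) - (k : ℝ) + ε)) := by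
  intro ε hε
  obtain ⟨K, hK, moment_le⟩ := exists_integral_norm_weylSum_pow_le hk hε
  refine ⟨32 * K, by positivity, fun N hN a ha lam hlam ↦ ?_⟩
  have hL : 0 < N ^ (k - 1) := by positivity
  have window_le (y₀ : ℝ) := setIntegral_norm_weylSum_pow_le hL <|
    moment_le N hN (fun n ↦ a n * ee (y₀ * (n : ℝ) ^ k)) (by simpa [norm_ee] using ha)
  have rpow_div : (N : ℝ) ^ (3 + ε) / N ^ (k - 1) = (N : ℝ) ^ ((4 : ℝ) - k + ε) := by
    rw [← rpow_natCast, ← rpow_sub (by positivity), Nat.cast_sub (by omega), Nat.cast_one]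
    ring_nf
  push_cast at window_le
  simp_rw [← weylSum_add_right] at window_le
  calc ∫ x in Set.Icc (-1 : ℝ) 1, ∫ y in Set.Icc (0 : ℝ) lam, ‖weylSum a k N (x, y)‖ ^ 6
      ≤ (lam / (1 / (8 * N ^ (k - 1))) + 1) * (4 * (K * (N : ℝ) ^ (3 + ε) / N ^ (k - 1))) :=
        integral_integral_Icc_le_mul_of_forall_translate
          (g := fun z ↦ ‖weylSum a k N z‖ ^ 6) (by fun_prop) (fun z ↦ by positivity)
          (by positivity) hlam window_le
    _ = 32 * K * (lam * (N : ℝ) ^ (3 + ε)) + 4 * K * ((N : ℝ) ^ (3 + ε) / N ^ (k - 1)) := by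
        field
    _ ≤ 32 * K * (lam * (N : ℝ) ^ (3 + ε) + (N : ℝ) ^ ((4 : ℝ) - k + ε)) := by
        rw [rpow_div, mul_add]
        gcongr
        norm_num

theorem sixth_moment_mixed_weyl_sum (k : ℕ) (hk : 4 ≤ k) :
    ∀ ε > (0 : ℝ), ∃ C > (0 : ℝ), ∀ N : ℕ, 1 ≤ N → ∀ lam : ℝ, 0 ≤ lam → lam ≤ 1 →
      (∫ x in Set.Icc (-1 : ℝ) 1, ∫ y in Set.Icc (0 : ℝ) lam,
          ‖∑ n ∈ Finset.Icc N (2 * N), ee (x * (n : ℝ) ^ 2 + y * (n : ℝ) ^ k)‖ ^ (6 : ℕ)) ≤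
        C * (lam * (N : ℝ) ^ ((3 : ℝ) + ε) + (N : ℝ) ^ ((4 : ℝ) - (k : ℝ) + ε)) := by
  intro ε hε
  obtain ⟨C, hC, moment_le⟩ := sixth_moment_mixed_weyl_sum_general k (by omega) ε hε
  exact ⟨C, hC, fun N hN lam hlam _ ↦ by simpa using moment_le N hN 1 (by simp) lam hlam⟩

end
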